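/- Let (u, v) be a C² solution of the p-system, let i ∈ {1, 2}, and let x : (−∞, t₀] → ℝ be a characteristic curve of the i-th eigenvalue defined on the whole semi-infinite interval (−∞, t₀]. Then either ∂rᵢ/∂x (t, x(t)) ≥ 0 for all t ≤ t₀, or −u(t, x(t)) → +∞ as t → −∞. -/

import Mathlib

/-!
The proof is by contradiction, for the first family; the second family is the first one for the
reflected solution `(u(t, -x), -v(t, -x))`. Write `R = v - q(u)`, `S = v + q(u)`.

The weighted slopes `z = (-p')^{1/4} R_x` and `y = (-p')^{1/4} S_x` satisfy the pure Riccati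
equations `ż = k z²`, `ẏ = k y²` along their characteristics, with `k > 0` bounded below on bounded
ranges of `u` (`Sol.riccati`, `Sol.kk_lower`). A characteristic with positive weighted slope never
reaches `u = 0`, because the slope does not decrease while the weight tends to zero there
(`Sol.extend`); it can only end by `u → -∞`.

Suppose `z < 0` somewhere on the backward curve `Γ = (t, x(t))` and `u` does not tend to `-∞`. Then
`-1/z` is positive and increasing with derivative `k`, so `∫ k` converges at `-∞`. Since `u` returns
to a bounded range infinitely often, it must change quickly, which means that `y` takes arbitrarily
large values at points of `Γ` arbitrarily far back with `u` bounded (`Sol.upstretch`).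

A 2-characteristic `C` issued from one such point reaches a point where `R` is smaller than its
constant value on `Γ` (`Sol.drop`). A 2-characteristic issued from a point of `Γ` very far back,
with `y` very large, would break down almost at once with `R` nearly unchanged, unless `z` becomes
large on it; hence it reaches a point with `z ≥ Z`, with `R` still nearly unchanged
(`Sol.far_left`). The 1-characteristic from that point has `z ≥ Z > 0`, so it can meet neither `Γ`
nor `C`, and it must meet the continuation of `C` (`Sol.crossing`). These curves bound a lens on
which `u ≤ 0` by the maximum principle in the elliptic region (`Sol.max_principle`), and transport
of `R` inside the lens shows that `R` is nearly at least its value on `Γ` also on `C`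
(`Sol.min_principle`, `Sol.lens_bound`), a contradiction.
-/

/-- `q(w) = ∫_w^0 √(-p'(s)) ds`. -/
noncomputable def qfun (p : ℝ → ℝ) (w : ℝ) : ℝ :=
  ∫ s in w..(0:ℝ), Real.sqrt (-(deriv p s))

/-- `(u, v)` solves the p-system `u_t = -v_x`, `v_t = (p(u))_x` on the domain `D`. -/
def PSystem (p : ℝ → ℝ) (u v : ℝ × ℝ → ℝ) (D : Set (ℝ × ℝ)) : Prop :=
  ∀ z ∈ D,
    deriv (fun s => u (s, z.2)) z.1 = -deriv (fun y => v (z.1, y)) z.2 ∧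
    deriv (fun s => v (s, z.2)) z.1 = deriv (fun y => p (u (z.1, y))) z.2

/-! ### Riemann invariants and Riccati equations -/

open Set Filter Topology

namespace PSys

/-- Partial derivative in time (first coordinate). -/
noncomputable def pt (f : ℝ × ℝ → ℝ) (z : ℝ × ℝ) : ℝ := fderiv ℝ f z (1, 0)

/-- Partial derivative in space (second coordinate). -/
noncomputable def px (f : ℝ × ℝ → ℝ) (z : ℝ × ℝ) : ℝ := fderiv ℝ f z (0, 1)

/-- Wave speed `√(-p'(w))`; it vanishes for `w ≥ 0`, where `-p' ≤ 0`. -/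
noncomputable def aa (p : ℝ → ℝ) (w : ℝ) : ℝ := Real.sqrt (-(deriv p w))

/-- Square root of the wave speed, the weight that removes the linear term of the
Riccati equation. -/
noncomputable def bb (p : ℝ → ℝ) (w : ℝ) : ℝ := Real.sqrt (aa p w)

/-- Coefficient `p'' / (4 (-p')^{5/4})` of the Riccati equation. -/
noncomputable def kk (p : ℝ → ℝ) (w : ℝ) : ℝ := deriv (deriv p) w / (4 * bb p w ^ 5)

/-- The `x`-derivative of the Riemann invariant `v - ε q(u)`. -/
noncomputable def ww (p : ℝ → ℝ) (u v : ℝ × ℝ → ℝ) (ε : ℝ) (z : ℝ × ℝ) : ℝ :=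
  px v z + ε * aa p (u z) * px u z

/-- The weighted derivative `(-p'(u))^{1/4} ∂ₓ(v - ε q(u))`, which solves a pure Riccati
equation along characteristics. -/
noncomputable def zz (p : ℝ → ℝ) (u v : ℝ × ℝ → ℝ) (ε : ℝ) (z : ℝ × ℝ) : ℝ :=
  bb p (u z) * ww p u v ε z

/-- The Riemann invariant `v - ε q(u)`. -/
noncomputable def rr (p : ℝ → ℝ) (u v : ℝ × ℝ → ℝ) (ε : ℝ) (z : ℝ × ℝ) : ℝ :=
  v z - ε * qfun p (u z)

/-- A `C²` solution of the p-system on the whole plane, with the system written in terms of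
`pt` and `px`. -/
structure Sol (p : ℝ → ℝ) (u v : ℝ × ℝ → ℝ) : Prop where
  hp : ContDiff ℝ 2 p
  hconv : ∀ w : ℝ, 0 < deriv (deriv p) w
  hp0 : deriv p 0 = 0
  hu : ContDiff ℝ 2 u
  hv : ContDiff ℝ 2 v
  sys1 : ∀ z, pt u z = - px v z
  sys2 : ∀ z, pt v z = deriv p (u z) * px u z

lemma hasDerivAt_curve {f : ℝ × ℝ → ℝ} {X : ℝ → ℝ} {c t : ℝ}
    (hf : DifferentiableAt ℝ f (t, X t)) (hX : HasDerivAt X c t) :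
    HasDerivAt (fun s => f (s, X s)) (pt f (t, X t) + c * px f (t, X t)) t := by
  have h1 : HasDerivAt (fun s : ℝ => (s, X s)) ((1 : ℝ), c) t := (hasDerivAt_id t).prodMk hX
  have h2 := hf.hasFDerivAt.comp_hasDerivAt t h1
  have e : ((1 : ℝ), c) = (1, 0) + c • ((0 : ℝ), (1 : ℝ)) := by ext <;> simp
  rw [e, map_add, map_smul] at h2
  exact h2

lemma hasDerivAt_px {f : ℝ × ℝ → ℝ} {z : ℝ × ℝ} (hf : DifferentiableAt ℝ f z) :
    HasDerivAt (fun y => f (z.1, y)) (px f z) z.2 := by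
  have h1 : HasDerivAt (fun s : ℝ => (z.1, s)) ((0 : ℝ), (1 : ℝ)) z.2 :=
    (hasDerivAt_const _ _).prodMk (hasDerivAt_id _)
  exact hf.hasFDerivAt.comp_hasDerivAt z.2 h1

lemma hasDerivAt_pt {f : ℝ × ℝ → ℝ} {z : ℝ × ℝ} (hf : DifferentiableAt ℝ f z) :
    HasDerivAt (fun y => f (y, z.2)) (pt f z) z.1 := by
  have h1 : HasDerivAt (fun s : ℝ => (s, z.2)) ((1 : ℝ), (0 : ℝ)) z.1 :=
    (hasDerivAt_id _).prodMk (hasDerivAt_const _ _)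
  exact hf.hasFDerivAt.comp_hasDerivAt z.1 h1

lemma contDiff_pt {f : ℝ × ℝ → ℝ} (hf : ContDiff ℝ 2 f) : ContDiff ℝ 1 (pt f) :=
  (hf.fderiv_right (m := 1) (by norm_num)).clm_apply contDiff_const

lemma contDiff_px {f : ℝ × ℝ → ℝ} (hf : ContDiff ℝ 2 f) : ContDiff ℝ 1 (px f) :=
  (hf.fderiv_right (m := 1) (by norm_num)).clm_apply contDiff_const

lemma pt_px_comm {f : ℝ × ℝ → ℝ} (hf : ContDiff ℝ 2 f) (z : ℝ × ℝ) :
    pt (px f) z = px (pt f) z := by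
  have hd : DifferentiableAt ℝ (fderiv ℝ f) z :=
    (hf.fderiv_right (m := 1) (by norm_num)).differentiable (by norm_num) z
  have hs : IsSymmSndFDerivAt ℝ f z := hf.contDiffAt.isSymmSndFDerivAt (by simp)
  unfold pt px
  rw [fderiv_clm_apply hd (differentiableAt_const _),
    fderiv_clm_apply hd (differentiableAt_const _)]
  simpa using hs (1, 0) (0, 1)

section
variable {p : ℝ → ℝ} {u v : ℝ × ℝ → ℝ}

lemma Sol.of_psystem (hp : ContDiff ℝ 2 p) (hconv : ∀ w : ℝ, 0 < deriv (deriv p) w)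
    (hp0 : deriv p 0 = 0) (hu : ContDiff ℝ 2 u) (hv : ContDiff ℝ 2 v)
    (hsys : PSystem p u v Set.univ) : Sol p u v := by
  have hud := hu.differentiable (by norm_num)
  have hvd := hv.differentiable (by norm_num)
  refine ⟨hp, hconv, hp0, hu, hv, fun z => ?_, fun z => ?_⟩
  · have := (hsys z (mem_univ _)).1
    rwa [(hasDerivAt_pt (hud z)).deriv, (hasDerivAt_px (hvd z)).deriv] at this
  · have := (hsys z (mem_univ _)).2
    have h1 : HasDerivAt (fun y => p (u (z.1, y))) (deriv p (u z) * px u z) z.2 :=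
      ((hp.differentiable (by norm_num) (u z)).hasDerivAt).comp z.2 (hasDerivAt_px (hud z))
    rwa [(hasDerivAt_pt (hvd z)).deriv, h1.deriv] at this

/-- The reflection `x ↦ -x`, `v ↦ -v` exchanges the two characteristic families. -/
lemma Sol.reflect (h : Sol p u v) :
    Sol p (fun z => u (z.1, -z.2)) (fun z => -v (z.1, -z.2)) := by
  have hud := h.hu.differentiable (by norm_num)
  have hvd := h.hv.differentiable (by norm_num)
  have hc : ContDiff ℝ 2 (fun z : ℝ × ℝ => (z.1, -z.2)) := by fun_prop
  have hu' : ContDiff ℝ 2 (fun z : ℝ × ℝ => u (z.1, -z.2)) := h.hu.comp hc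
  have hv' : ContDiff ℝ 2 (fun z : ℝ × ℝ => -v (z.1, -z.2)) := (h.hv.comp hc).neg
  have hud' := hu'.differentiable (by norm_num)
  have hvd' := hv'.differentiable (by norm_num)
  have t1 : ∀ z : ℝ × ℝ, pt (fun z => u (z.1, -z.2)) z = pt u (z.1, -z.2) := fun z =>
    (hasDerivAt_pt (hud' z)).unique (hasDerivAt_pt (hud (z.1, -z.2)))
  have t2 : ∀ z : ℝ × ℝ, pt (fun z => -v (z.1, -z.2)) z = -pt v (z.1, -z.2) := fun z =>
    (hasDerivAt_pt (hvd' z)).unique (hasDerivAt_pt (hvd (z.1, -z.2))).neg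
  have t3 : ∀ z : ℝ × ℝ, px (fun z => u (z.1, -z.2)) z = -px u (z.1, -z.2) := fun z => by
    have := (hasDerivAt_px (hud (z.1, -z.2))).comp z.2 (hasDerivAt_neg z.2)
    simpa using (hasDerivAt_px (hud' z)).unique this
  have t4 : ∀ z : ℝ × ℝ, px (fun z => -v (z.1, -z.2)) z = px v (z.1, -z.2) := fun z => by
    have := ((hasDerivAt_px (hvd (z.1, -z.2))).comp z.2 (hasDerivAt_neg z.2)).neg
    simpa using (hasDerivAt_px (hvd' z)).unique this
  refine ⟨h.hp, h.hconv, h.hp0, hu', hv', fun z => ?_, fun z => ?_⟩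
  · rw [t1, t4, h.sys1]
  · rw [t2, t3, h.sys2]; ring

/-! ### The wave speed and the Riccati coefficient -/

lemma Sol.hdp (h : Sol p u v) : ContDiff ℝ 1 (deriv p) := by
  have := h.hp
  rw [show (2 : WithTop ℕ∞) = 1 + 1 by norm_num, contDiff_succ_iff_deriv] at this
  exact this.2.2

lemma Sol.hddp (h : Sol p u v) : Continuous (deriv (deriv p)) :=
  h.hdp.continuous_deriv le_rfl

lemma Sol.dp_mono (h : Sol p u v) : StrictMono (deriv p) := strictMono_of_deriv_pos h.hconv

lemma Sol.dp_neg (h : Sol p u v) {w : ℝ} (hw : w < 0) : deriv p w < 0 := by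
  have := h.dp_mono hw; rwa [h.hp0] at this

lemma Sol.aa_pos (h : Sol p u v) {w : ℝ} (hw : w < 0) : 0 < aa p w :=
  Real.sqrt_pos.2 (by linarith [h.dp_neg hw])

lemma aa_nonneg (w : ℝ) : 0 ≤ aa p w := Real.sqrt_nonneg _

lemma Sol.bb_pos (h : Sol p u v) {w : ℝ} (hw : w < 0) : 0 < bb p w :=
  Real.sqrt_pos.2 (h.aa_pos hw)

lemma bb_nonneg (w : ℝ) : 0 ≤ bb p w := Real.sqrt_nonneg _

lemma bb_sq (w : ℝ) : bb p w ^ 2 = aa p w := Real.sq_sqrt (aa_nonneg w)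

lemma Sol.aa_sq (h : Sol p u v) {w : ℝ} (hw : w ≤ 0) : aa p w ^ 2 = -deriv p w := by
  refine Real.sq_sqrt ?_
  have := h.dp_mono.monotone hw
  rw [h.hp0] at this; linarith

lemma Sol.aa_anti (h : Sol p u v) : Antitone (aa p) := fun _ _ hxy =>
  Real.sqrt_le_sqrt (neg_le_neg (h.dp_mono.monotone hxy))

lemma Sol.bb_anti (h : Sol p u v) : Antitone (bb p) := fun _ _ hxy =>
  Real.sqrt_le_sqrt (h.aa_anti hxy)

lemma Sol.aa_cont (h : Sol p u v) : Continuous (aa p) :=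
  Real.continuous_sqrt.comp h.hdp.continuous.neg

lemma Sol.bb_cont (h : Sol p u v) : Continuous (bb p) := Real.continuous_sqrt.comp h.aa_cont

lemma Sol.bb_zero (h : Sol p u v) : bb p 0 = 0 := by simp [bb, aa, h.hp0]

lemma Sol.aa_deriv (h : Sol p u v) {w : ℝ} (hw : w < 0) :
    HasDerivAt (aa p) (-deriv (deriv p) w / (2 * aa p w)) w := by
  have h1 : HasDerivAt (deriv p) (deriv (deriv p) w) w :=
    (h.hdp.differentiable one_ne_zero w).hasDerivAt
  exact h1.fun_neg.sqrt (by linarith [h.dp_neg hw])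

lemma Sol.bb_deriv (h : Sol p u v) {w : ℝ} (hw : w < 0) :
    HasDerivAt (bb p) (-deriv (deriv p) w / (2 * aa p w) / (2 * bb p w)) w :=
  (h.aa_deriv hw).sqrt (h.aa_pos hw).ne'

lemma Sol.kk_pos (h : Sol p u v) {w : ℝ} (hw : w < 0) : 0 < kk p w :=
  div_pos (h.hconv w) (by have := h.bb_pos hw; positivity)

lemma Sol.kk_lower (h : Sol p u v) (L : ℝ) :
    ∃ κ > 0, ∀ w, -L ≤ w → w < 0 → κ ≤ kk p w := by
  by_cases hL : -L < 0
  · obtain ⟨m, hm, hmin⟩ := (isCompact_Icc (a := -L) (b := 0)).exists_isMinOn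
      ⟨0, by constructor <;> linarith⟩ h.hddp.continuousOn
    have hb := h.bb_pos hL
    refine ⟨deriv (deriv p) m / (4 * bb p (-L) ^ 5), div_pos (h.hconv m) (by positivity), ?_⟩
    intro w hw hw0
    have hbw := h.bb_pos hw0
    have h1 : deriv (deriv p) m ≤ deriv (deriv p) w := hmin ⟨hw, hw0.le⟩
    have h2 : bb p w ≤ bb p (-L) := h.bb_anti hw
    have h3 := h.hconv m
    have h4 := (h.hconv w).le
    unfold kk
    gcongr
  · exact ⟨1, one_pos, fun w h1 h2 => by linarith⟩

lemma Sol.qfun_deriv (h : Sol p u v) (w : ℝ) : HasDerivAt (qfun p) (-aa p w) w :=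
  intervalIntegral.integral_hasDerivAt_left (h.aa_cont.intervalIntegrable _ _)
    (h.aa_cont.stronglyMeasurableAtFilter _ _) h.aa_cont.continuousAt

lemma Sol.qfun_anti (h : Sol p u v) : Antitone (qfun p) :=
  antitone_of_hasDerivAt_nonpos (h.qfun_deriv) (fun w => by simpa using aa_nonneg w)

/-- `q` grows at least linearly to the left, with slope `√(-p'(w))`. -/
lemma Sol.qfun_growth (h : Sol p u v) {x w : ℝ} (hxw : x ≤ w) :
    aa p w * (w - x) ≤ qfun p x - qfun p w := by
  have hm : AntitoneOn (fun y => qfun p y + aa p w * y) (Iic w) := by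
    refine antitoneOn_of_hasDerivWithinAt_nonpos (f' := fun y => -aa p y + aa p w * 1)
      (convex_Iic w) ?_ ?_ ?_
    · exact fun y _ => ((h.qfun_deriv y).add
        ((hasDerivAt_id y).const_mul (aa p w))).continuousAt.continuousWithinAt
    · intro y _
      exact ((h.qfun_deriv y).add ((hasDerivAt_id y).const_mul _)).hasDerivWithinAt
    · intro y hy
      rw [interior_Iic] at hy
      have := h.aa_anti (le_of_lt hy)
      linarith
  have := hm (show x ∈ Iic w from hxw) (self_mem_Iic) hxw
  simp only at this
  nlinarith

/-! ### Regularity of the derived quantities -/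

lemma Sol.hud (h : Sol p u v) : Differentiable ℝ u := h.hu.differentiable (by norm_num)
lemma Sol.hvd (h : Sol p u v) : Differentiable ℝ v := h.hv.differentiable (by norm_num)

lemma Sol.ww_cont (h : Sol p u v) (ε : ℝ) : Continuous (ww p u v ε) :=
  (contDiff_px h.hv).continuous.add
    ((continuous_const.mul (h.aa_cont.comp h.hu.continuous)).mul (contDiff_px h.hu).continuous)

lemma Sol.zz_cont (h : Sol p u v) (ε : ℝ) : Continuous (zz p u v ε) :=
  (h.bb_cont.comp h.hu.continuous).mul (h.ww_cont ε)

lemma Sol.qfun_cont (h : Sol p u v) : Continuous (qfun p) :=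
  continuous_iff_continuousAt.2 fun w => (h.qfun_deriv w).continuousAt

lemma Sol.rr_cont (h : Sol p u v) (ε : ℝ) : Continuous (rr p u v ε) :=
  h.hv.continuous.sub (continuous_const.mul (h.qfun_cont.comp h.hu.continuous))

/-- Derivative of the Riemann invariant `v - ε q(u)` along any curve inside `{u ≤ 0}`. -/
lemma Sol.rr_curve (h : Sol p u v) {ε : ℝ} (hε : ε ^ 2 = 1) {X : ℝ → ℝ} {c t : ℝ}
    (hX : HasDerivAt X c t) (hu0 : u (t, X t) ≤ 0) :
    HasDerivAt (fun s => rr p u v ε (s, X s))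
      ((c - ε * aa p (u (t, X t))) * ww p u v ε (t, X t)) t := by
  have h1 := hasDerivAt_curve (h.hvd (t, X t)) hX
  have h2 := (h.qfun_deriv (u (t, X t))).comp t (hasDerivAt_curve (h.hud (t, X t)) hX)
  have h3 := h1.fun_sub (h2.const_mul ε)
  refine h3.congr_deriv ?_
  rw [h.sys1, h.sys2]
  have := h.aa_sq hu0
  unfold ww
  linear_combination px u (t, X t) * this + aa p (u (t, X t)) ^ 2 * px u (t, X t) * hε

lemma Sol.px_pt_v (h : Sol p u v) (P : ℝ × ℝ) :
    px (pt v) P = deriv (deriv p) (u P) * px u P ^ 2 + deriv p (u P) * px (px u) P := by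
  have e : pt v = fun z => deriv p (u z) * px u z := funext h.sys2
  have d0 : HasDerivAt (deriv p) (deriv (deriv p) (u P)) (u P) :=
    (h.hdp.differentiable one_ne_zero (u P)).hasDerivAt
  have d1 : HasDerivAt (fun y => deriv p (u (P.1, y)))
      (deriv (deriv p) (u P) * px u P) P.2 :=
    HasDerivAt.comp (h₂ := deriv p) P.2 d0 (hasDerivAt_px (h.hud P))
  have d2 := d1.fun_mul (hasDerivAt_px (((contDiff_px h.hu).differentiable one_ne_zero) P))
  have hd : DifferentiableAt ℝ (pt v) P := (contDiff_pt h.hv).differentiable one_ne_zero P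
  have d3 := hasDerivAt_px hd
  rw [e] at d3
  rw [e, d3.unique d2]
  ring

/-- `zz` solves a pure Riccati equation along characteristics of its family. -/
lemma Sol.riccati (h : Sol p u v) {ε : ℝ} (hε : ε ^ 2 = 1) {X : ℝ → ℝ} {t : ℝ}
    (hX : HasDerivAt X (ε * aa p (u (t, X t))) t) (hu0 : u (t, X t) < 0) :
    HasDerivAt (fun s => zz p u v ε (s, X s))
      (kk p (u (t, X t)) * zz p u v ε (t, X t) ^ 2) t := by
  set P := (t, X t) with hP
  have ha := h.aa_pos hu0
  have hb := h.bb_pos hu0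
  have hab := bb_sq (p := p) (u P)
  have du := hasDerivAt_curve (h.hud P) hX
  have dvx := hasDerivAt_curve (((contDiff_px h.hv).differentiable one_ne_zero) P) hX
  have dux := hasDerivAt_curve (((contDiff_px h.hu).differentiable one_ne_zero) P) hX
  have da := (h.aa_deriv hu0).comp t du
  have db := (h.bb_deriv hu0).comp t du
  have key := db.fun_mul (dvx.fun_add ((da.const_mul ε).fun_mul dux))
  refine key.congr_deriv ?_
  simp only [Function.comp_apply, ← hP]
  -- second-order consequences of the system
  have s1 : px (pt u) P = - px (px v) P := by
    have : pt u = fun z => - px v z := funext h.sys1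
    rw [this]
    exact (hasDerivAt_px (((contDiff_px h.hv).differentiable one_ne_zero).neg P)).unique
      (hasDerivAt_px (((contDiff_px h.hv).differentiable one_ne_zero) P)).neg
  have s2 := h.px_pt_v P
  rw [pt_px_comm h.hv, pt_px_comm h.hu, s2, s1, h.sys1]
  have hsq := h.aa_sq hu0.le
  have hdp : deriv p (u P) = - bb p (u P) ^ 4 := by
    rw [← hab] at hsq; linear_combination hsq
  unfold zz ww kk
  rw [hdp, ← hab]
  field_simp
  ring_nf
  simp only [hε]
  ring

end

/-! ### Characteristic arcs -/

section
variable {p : ℝ → ℝ} {u v : ℝ × ℝ → ℝ}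

lemma slope_le {f f' : ℝ → ℝ} {a b κ : ℝ} (hab : a ≤ b) (hf : ContinuousOn f (Icc a b))
    (hd : ∀ t ∈ Ioo a b, HasDerivAt f (f' t) t) (hκ : ∀ t ∈ Ioo a b, κ ≤ f' t) :
    κ * (b - a) ≤ f b - f a := by
  rcases hab.eq_or_lt with rfl | hlt
  · simp
  · obtain ⟨c, hc, he⟩ := exists_hasDerivAt_eq_slope f f' hlt hf hd
    have := hκ c hc
    rwa [he, le_div_iff₀ (by linarith)] at this

/-- A compact characteristic arc `t ↦ (t, X t)`, `t ∈ [t₁, t₂]`, of the family `ε` inside the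
hyperbolic region. -/
structure IsChar (p : ℝ → ℝ) (u : ℝ × ℝ → ℝ) (ε : ℝ) (X : ℝ → ℝ) (t₁ t₂ : ℝ) : Prop where
  cont : ContinuousOn X (Icc t₁ t₂)
  der : ∀ t ∈ Ioo t₁ t₂, HasDerivAt X (ε * aa p (u (t, X t))) t
  neg : ∀ t ∈ Icc t₁ t₂, u (t, X t) < 0

variable {X : ℝ → ℝ} {ε t₁ t₂ : ℝ}

lemma IsChar.sub (hX : IsChar p u ε X t₁ t₂) {s₁ s₂ : ℝ} (h1 : t₁ ≤ s₁) (h2 : s₂ ≤ t₂) :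
    IsChar p u ε X s₁ s₂ :=
  ⟨hX.cont.mono (Icc_subset_Icc h1 h2), fun t ht => hX.der t (Ioo_subset_Ioo h1 h2 ht),
    fun t ht => hX.neg t (Icc_subset_Icc h1 h2 ht)⟩

lemma IsChar.cont_comp (hX : IsChar p u ε X t₁ t₂) {f : ℝ × ℝ → ℝ} (hf : Continuous f) :
    ContinuousOn (fun t => f (t, X t)) (Icc t₁ t₂) :=
  hf.comp_continuousOn (continuousOn_id.prodMk hX.cont)

lemma IsChar.zz_le (h : Sol p u v) (hε : ε ^ 2 = 1) (hX : IsChar p u ε X t₁ t₂)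
    {s t : ℝ} (hs : t₁ ≤ s) (hst : s ≤ t) (ht : t ≤ t₂) :
    zz p u v ε (s, X s) ≤ zz p u v ε (t, X t) := by
  have hX' := hX.sub hs ht
  have := slope_le (κ := 0) hst (hX'.cont_comp (h.zz_cont ε))
    (fun r hr => h.riccati hε (hX'.der r hr) (hX'.neg r (Ioo_subset_Icc_self hr)))
    (fun r hr => mul_nonneg (h.kk_pos (hX'.neg r (Ioo_subset_Icc_self hr))).le (sq_nonneg _))
  linarith

lemma IsChar.rr_const (h : Sol p u v) (hε : ε ^ 2 = 1) (hX : IsChar p u ε X t₁ t₂)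
    {t : ℝ} (ht : t ∈ Icc t₁ t₂) : rr p u v ε (t, X t) = rr p u v ε (t₁, X t₁) := by
  have hX' := hX.sub le_rfl ht.2
  have hc := hX'.cont_comp (h.rr_cont ε)
  have hd : ∀ r ∈ Ioo t₁ t, HasDerivAt (fun s => rr p u v ε (s, X s)) 0 r := fun r hr =>
    (h.rr_curve hε (hX'.der r hr) (hX'.neg r (Ioo_subset_Icc_self hr)).le).congr_deriv (by ring)
  have h1 := slope_le (κ := 0) ht.1 hc hd (fun _ _ => le_rfl)
  have h2 := slope_le (κ := 0) ht.1 hc.neg (fun r hr => (hd r hr).neg) (fun _ _ => by simp)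
  simp only [Pi.neg_apply] at h2
  linarith

/-- Riccati blow-up, quantitative form: on an arc of the second family with positive weighted
slope, the coefficient has integral at most the reciprocal of the initial slope; the term with
`μ` additionally accounts for the distance travelled. -/
lemma IsChar.recip (h : Sol p u v) (hX : IsChar p u (-1) X t₁ t₂) (h12 : t₁ ≤ t₂)
    (hpos : 0 < zz p u v (-1) (t₁, X t₁)) {κ μ : ℝ}
    (hκ : ∀ t ∈ Ioo t₁ t₂, κ ≤ kk p (u (t, X t)) + μ * aa p (u (t, X t))) :
    κ * (t₂ - t₁) ≤ 1 / zz p u v (-1) (t₁, X t₁) + μ * (X t₁ - X t₂) := by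
  have hz : ∀ t ∈ Icc t₁ t₂, 0 < zz p u v (-1) (t, X t) := fun t ht =>
    hpos.trans_le (hX.zz_le h (by norm_num) le_rfl ht.1 ht.2)
  have hc : ContinuousOn (fun t => -(zz p u v (-1) (t, X t))⁻¹ - μ * X t) (Icc t₁ t₂) :=
    (((hX.cont_comp (h.zz_cont (-1))).inv₀ (fun t ht => (hz t ht).ne')).neg).sub
      (continuousOn_const.mul hX.cont)
  have hd : ∀ t ∈ Ioo t₁ t₂, HasDerivAt (fun t => -(zz p u v (-1) (t, X t))⁻¹ - μ * X t)
      (kk p (u (t, X t)) + μ * aa p (u (t, X t))) t := by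
    intro t ht
    have hne := (hz t (Ioo_subset_Icc_self ht)).ne'
    have d1 := (h.riccati (by norm_num) (hX.der t ht) (hX.neg t (Ioo_subset_Icc_self ht)))
    have d2 := (d1.fun_inv hne).fun_neg.fun_sub ((hX.der t ht).const_mul μ)
    refine d2.congr_deriv ?_
    field_simp
    ring
  have := slope_le h12 hc hd hκ
  have h2 : 0 < (zz p u v (-1) (t₂, X t₂))⁻¹ := inv_pos.2 (hz t₂ ⟨h12, le_rfl⟩)
  rw [one_div]
  linarith

lemma IsChar.lt_of_pos (h : Sol p u v) (hX : IsChar p u 1 X t₁ t₂)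
    {s t : ℝ} (hs : t₁ ≤ s) (hst : s < t) (ht : t ≤ t₂) : X s < X t := by
  have hX' := hX.sub hs ht
  obtain ⟨c, hc, he⟩ := exists_hasDerivAt_eq_slope X _ hst hX'.cont hX'.der
  have := h.aa_pos (hX'.neg c (Ioo_subset_Icc_self hc))
  rw [one_mul, eq_div_iff (by linarith)] at he
  nlinarith

lemma IsChar.lt_of_neg (h : Sol p u v) (hX : IsChar p u (-1) X t₁ t₂)
    {s t : ℝ} (hs : t₁ ≤ s) (hst : s < t) (ht : t ≤ t₂) : X t < X s := by
  have hX' := hX.sub hs ht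
  obtain ⟨c, hc, he⟩ := exists_hasDerivAt_eq_slope X _ hst hX'.cont hX'.der
  have := h.aa_pos (hX'.neg c (Ioo_subset_Icc_self hc))
  rw [eq_div_iff (by linarith)] at he
  nlinarith

/-- On an arc of the second family, the first Riemann invariant decreases at a rate controlled by
the weighted slope of the first family. -/
lemma IsChar.rr_lower (h : Sol p u v) (hX : IsChar p u (-1) X t₁ t₂) (h12 : t₁ ≤ t₂)
    {Z B : ℝ} (hZ0 : 0 ≤ Z) (hZ : ∀ t ∈ Ioo t₁ t₂, zz p u v 1 (t, X t) ≤ Z)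
    (hB : ∀ t ∈ Ioo t₁ t₂, bb p (u (t, X t)) ≤ B) :
    rr p u v 1 (t₁, X t₁) - 2 * B * Z * (t₂ - t₁) ≤ rr p u v 1 (t₂, X t₂) := by
  have := slope_le (κ := -(2 * B * Z)) h12 (hX.cont_comp (h.rr_cont 1))
    (fun r hr => h.rr_curve (by norm_num) (hX.der r hr) (hX.neg r (Ioo_subset_Icc_self hr)).le) ?_
  · linarith
  · intro t ht
    have h1 := hZ t ht
    have h2 := hB t ht
    have h3 := bb_nonneg (p := p) (u (t, X t))
    have h4 : bb p (u (t, X t)) * zz p u v 1 (t, X t) ≤ B * Z := by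
      refine (mul_le_mul_of_nonneg_left h1 h3).trans (mul_le_mul_of_nonneg_right h2 hZ0)
    have h5 := bb_sq (p := p) (u (t, X t))
    have h6 : aa p (u (t, X t)) * ww p u v 1 (t, X t)
        = bb p (u (t, X t)) * zz p u v 1 (t, X t) := by
      rw [← h5]; unfold zz; ring
    linarith

lemma lipschitz_sqrt_max {m : ℝ} (hm : 0 < m) :
    LocallyLipschitz (fun y : ℝ => Real.sqrt (max m y)) := by
  have : LipschitzWith (Real.toNNReal (1 / √m)) (fun y : ℝ => Real.sqrt (max m y)) := by
    refine LipschitzWith.of_dist_le_mul fun x y => ?_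
    have hsm : 0 < √m := Real.sqrt_pos.2 hm
    rw [Real.coe_toNNReal _ (by positivity), Real.dist_eq, Real.dist_eq]
    have hx : √m ≤ √(max m x) := Real.sqrt_le_sqrt (le_max_left _ _)
    have hy : √m ≤ √(max m y) := Real.sqrt_le_sqrt (le_max_left _ _)
    have e1 : √(max m x) ^ 2 = max m x := Real.sq_sqrt (hm.le.trans (le_max_left _ _))
    have e2 : √(max m y) ^ 2 = max m y := Real.sq_sqrt (hm.le.trans (le_max_left _ _))
    have h1 : |max m x - max m y| ≤ |x - y| := by
      simpa using abs_max_sub_max_le_max m x m y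
    have h2 : |max m x - max m y|
        = |√(max m x) - √(max m y)| * (√(max m x) + √(max m y)) := by
      rw [← abs_of_pos (a := √(max m x) + √(max m y)) (by linarith), ← abs_mul]
      congr 1
      linear_combination -e1 + e2
    rw [one_div, ← div_eq_inv_mul, le_div_iff₀ hsm]
    refine le_trans ?_ (h2.symm.le.trans h1)
    exact mul_le_mul_of_nonneg_left (by linarith) (abs_nonneg _)
  exact this.locallyLipschitz

/-- A characteristic with positive weighted slope can be continued forward until a prescribed time
or until `u` reaches a prescribed negative level: it never meets `u = 0`, since the slope does not
decrease while the weight tends to `0` there. -/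
lemma Sol.extend (h : Sol p u v) (hε : ε ^ 2 = 1) {ts xs T L : ℝ} (hT : ts < T)
    (hL : -L < u (ts, xs)) (hu0 : u (ts, xs) < 0) (hz : 0 < zz p u v ε (ts, xs)) :
    ∃ τ X, ts < τ ∧ τ ≤ T ∧ X ts = xs ∧ IsChar p u ε X ts τ ∧
      (∀ t ∈ Icc ts τ, -L ≤ u (t, X t)) ∧ (τ = T ∨ u (τ, X τ) = -L) := by
  have hεa : |ε| = 1 := by
    rw [← abs_one, ← sq_eq_sq_iff_abs_eq_abs]; simpa using hε
  set A := aa p (-L) with hA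
  have hA0 : 0 ≤ A := aa_nonneg _
  set ρ := A * (T - ts) with hρ
  have hρ0 : 0 ≤ ρ := mul_nonneg hA0 (by linarith)
  set box : Set (ℝ × ℝ) := Icc ts T ×ˢ Metric.closedBall xs ρ with hbox
  have hboxc : IsCompact box := isCompact_Icc.prod (isCompact_closedBall _ _)
  obtain ⟨B, hB⟩ := hboxc.exists_bound_of_continuousOn (h.ww_cont ε).continuousOn
  have hB0 : 0 ≤ B := (norm_nonneg _).trans
    (hB (ts, xs) ⟨⟨le_rfl, hT.le⟩, Metric.mem_closedBall_self hρ0⟩)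
  -- a level `-δ` at which the weight is too small to carry the initial slope
  obtain ⟨δ, hδ0, hδu, hδ⟩ : ∃ δ > 0, u (ts, xs) < -δ ∧ bb p (-δ) * B < zz p u v ε (ts, xs) := by
    have h1 : Tendsto (fun δ : ℝ => bb p (-δ) * B) (𝓝[>] 0) (𝓝 (bb p (-0) * B)) :=
      ((h.bb_cont.comp continuous_neg).mul continuous_const).continuousAt.tendsto.mono_left
        nhdsWithin_le_nhds
    rw [neg_zero, h.bb_zero, zero_mul] at h1
    have h2 : Tendsto (fun δ : ℝ => -δ) (𝓝[>] 0) (𝓝 (-0)) :=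
      continuous_neg.continuousAt.tendsto.mono_left nhdsWithin_le_nhds
    rw [neg_zero] at h2
    obtain ⟨δ, ⟨h3, h4⟩, h5⟩ := (((h1.eventually (gt_mem_nhds hz)).and
      (h2.eventually (lt_mem_nhds hu0))).and self_mem_nhdsWithin).exists
    exact ⟨δ, h5, h4, h3⟩
  set m := -deriv p (-δ) with hm
  have hm0 : 0 < m := by have := h.dp_neg (w := -δ) (by linarith); linarith
  set M := -deriv p (-L) with hM
  have hmM : m ≤ M := by have := h.dp_mono.monotone (a := -L) (b := -δ) (by linarith); linarith
  set F : ℝ × ℝ → ℝ := fun z => ε * √(max m (min M (-deriv p (u z)))) with hF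
  have hFl : LocallyLipschitz F := by
    have l1 : LocallyLipschitz u := (h.hu.of_le (by norm_num)).locallyLipschitz
    have l2 : LocallyLipschitz (fun y => -deriv p y) := h.hdp.neg.locallyLipschitz
    have l3 : LocallyLipschitz (fun y : ℝ => min M y) :=
      (LipschitzWith.id.const_min M).locallyLipschitz
    have l4 : LocallyLipschitz (fun y : ℝ => ε * y) :=
      (contDiff_const.mul contDiff_id : ContDiff ℝ 1 (fun y : ℝ => ε * y)).locallyLipschitz
    exact l4.comp ((lipschitz_sqrt_max hm0).comp (l3.comp (l2.comp l1)))
  obtain ⟨K, hK⟩ := hFl.locallyLipschitzOn.exists_lipschitzOnWith_of_compact hboxc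
  have hFb : ∀ z, ‖F z‖ ≤ A := by
    intro z
    rw [hF, Real.norm_eq_abs, abs_mul, hεa, one_mul, abs_of_nonneg (Real.sqrt_nonneg _)]
    exact Real.sqrt_le_sqrt (max_le hmM (min_le_left _ _))
  have hPL : IsPicardLindelof (fun t x => F (t, x)) (⟨ts, le_rfl, hT.le⟩ : Icc ts T) xs
      ⟨ρ, hρ0⟩ 0 ⟨A, hA0⟩ K := by
    refine ⟨fun t ht => ?_, fun x _ => ?_, fun t _ x _ => hFb _, ?_⟩
    · intro x hx y hy
      have := hK (x := (t, x)) ⟨ht, hx⟩ (y := (t, y)) ⟨ht, hy⟩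
      simpa [Prod.edist_eq] using this
    · exact (hFl.continuous.comp (by fun_prop)).continuousOn
    · show A * max (T - ts) (ts - ts) ≤ ρ - 0
      rw [max_eq_left (by linarith)]; linarith [hρ]
  obtain ⟨X, hX0, hXd⟩ := hPL.exists_eq_forall_mem_Icc_hasDerivWithinAt₀
  simp only at hX0
  have hXc : ContinuousOn X (Icc ts T) := fun t ht => (hXd t ht).continuousWithinAt
  have huc : ContinuousOn (fun t => u (t, X t)) (Icc ts T) :=
    h.hu.continuous.comp_continuousOn (continuousOn_id.prodMk hXc)
  have hXd' : ∀ t ∈ Ioo ts T, HasDerivAt X (F (t, X t)) t := fun t ht =>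
    (hXd t (Ioo_subset_Icc_self ht)).hasDerivAt (Icc_mem_nhds ht.1 ht.2)
  have hXb : ∀ t ∈ Icc ts T, (t, X t) ∈ box := by
    intro t ht
    refine ⟨ht, ?_⟩
    have hb := (convex_Icc ts T).norm_image_sub_le_of_norm_hasDerivWithin_le
      (fun x hx => hXd x hx) (fun x _ => hFb _) (show ts ∈ Icc ts T from ⟨le_rfl, hT.le⟩) ht
    rw [hX0, Real.norm_eq_abs (t - ts), abs_of_nonneg (by linarith [ht.1])] at hb
    rw [mem_closedBall_iff_norm]
    exact hb.trans (mul_le_mul_of_nonneg_left (by linarith [ht.2]) hA0)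
  have hFe : ∀ z, -L ≤ u z → u z ≤ -δ → F z = ε * aa p (u z) := by
    intro z h1 h2
    have e1 := h.dp_mono.monotone h1
    have e2 := h.dp_mono.monotone h2
    simp only [hF, aa]
    rw [min_eq_right (by linarith), max_eq_right (by linarith)]
  -- the time at which the level `-L` is reached, or `T`
  obtain ⟨τ, hτ0, hτT, hτL, hτe⟩ : ∃ τ, ts < τ ∧ τ ≤ T ∧ (∀ t ∈ Icc ts τ, -L ≤ u (t, X t)) ∧
      (τ = T ∨ u (τ, X τ) = -L) := by
    by_cases hE : ∃ t ∈ Icc ts T, u (t, X t) ≤ -L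
    · have hcl : IsCompact {t ∈ Icc ts T | u (t, X t) ≤ -L} :=
        isCompact_Icc.of_isClosed_subset
          (huc.preimage_isClosed_of_isClosed isClosed_Icc isClosed_Iic) (fun t ht => ht.1)
      obtain ⟨τ, ⟨hτ1, hτ2⟩, hτ3⟩ := hcl.exists_isLeast hE
      have hne : ts ≠ τ := by
        rintro rfl
        rw [hX0] at hτ2; linarith
      have hlt : ts < τ := lt_of_le_of_ne hτ1.1 hne
      have hbefore : ∀ t ∈ Ico ts τ, -L ≤ u (t, X t) := by
        intro t ht
        by_contra hcon
        exact absurd (hτ3 ⟨⟨ht.1, ht.2.le.trans hτ1.2⟩, (not_le.1 hcon).le⟩) (not_le.2 ht.2)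
      have hall : ∀ t ∈ Icc ts τ, -L ≤ u (t, X t) := by
        have hcs := (huc.mono (Icc_subset_Icc le_rfl hτ1.2)).preimage_isClosed_of_isClosed
          isClosed_Icc (isClosed_Ici (a := -L))
        have hsub : closure (Ico ts τ) ⊆ Icc ts τ ∩ (fun t => u (t, X t)) ⁻¹' Ici (-L) :=
          hcs.closure_subset_iff.2 fun t ht => ⟨Ico_subset_Icc_self ht, hbefore t ht⟩
        rw [closure_Ico hne] at hsub
        exact fun t ht => (hsub ht).2
      exact ⟨τ, hlt, hτ1.2, hall, Or.inr (le_antisymm hτ2 (hall τ ⟨hτ1.1, le_rfl⟩))⟩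
    · push Not at hE
      exact ⟨T, hT, le_rfl, fun t ht => (hE t ht).le, Or.inl rfl⟩
  have huδ : ∀ t ∈ Icc ts τ, u (t, X t) < -δ := by
    by_contra hcon
    push Not at hcon
    have huc' := huc.mono (Icc_subset_Icc le_rfl hτT)
    have hcl : IsCompact {t ∈ Icc ts τ | -δ ≤ u (t, X t)} :=
      isCompact_Icc.of_isClosed_subset
        (huc'.preimage_isClosed_of_isClosed isClosed_Icc isClosed_Ici) (fun t ht => ht.1)
    obtain ⟨σ, ⟨hσ1, hσ2⟩, hσ3⟩ := hcl.exists_isLeast hcon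
    have hne : ts ≠ σ := by
      rintro rfl
      rw [hX0] at hσ2; linarith
    have hall : ∀ t ∈ Icc ts σ, u (t, X t) ≤ -δ := by
      have hcs := (huc'.mono (Icc_subset_Icc le_rfl hσ1.2)).preimage_isClosed_of_isClosed
        isClosed_Icc (isClosed_Iic (a := -δ))
      have hsub : closure (Ico ts σ) ⊆ Icc ts σ ∩ (fun t => u (t, X t)) ⁻¹' Iic (-δ) := by
        refine hcs.closure_subset_iff.2 fun t ht => ⟨Ico_subset_Icc_self ht, ?_⟩
        by_contra hc
        exact absurd (hσ3 ⟨⟨ht.1, ht.2.le.trans hσ1.2⟩, (not_le.1 hc).le⟩) (not_le.2 ht.2)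
      rw [closure_Ico hne] at hsub
      exact fun t ht => (hsub ht).2
    have hch : IsChar p u ε X ts σ := by
      refine ⟨hXc.mono (Icc_subset_Icc le_rfl (hσ1.2.trans hτT)), fun t ht => ?_, fun t ht => ?_⟩
      · rw [← hFe (t, X t) (hτL t ⟨ht.1.le, ht.2.le.trans hσ1.2⟩)
          (hall t (Ioo_subset_Icc_self ht))]
        exact hXd' t ⟨ht.1, ht.2.trans_le (hσ1.2.trans hτT)⟩
      · linarith [hall t ht]
    have h1 := hch.zz_le h hε le_rfl hσ1.1 le_rfl
    rw [hX0] at h1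
    have h2 : u (σ, X σ) = -δ := le_antisymm (hall σ ⟨hσ1.1, le_rfl⟩) hσ2
    have h3 := hB _ (hXb σ ⟨hσ1.1, hσ1.2.trans hτT⟩)
    have h4 : zz p u v ε (σ, X σ) ≤ bb p (-δ) * B := by
      unfold zz; rw [h2]
      exact mul_le_mul_of_nonneg_left ((le_abs_self _).trans h3) (bb_nonneg _)
    linarith
  refine ⟨τ, X, hτ0, hτT, hX0, ⟨hXc.mono (Icc_subset_Icc le_rfl hτT), fun t ht => ?_,
    fun t ht => by linarith [huδ t ht]⟩, hτL, hτe⟩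
  rw [← hFe (t, X t) (hτL t (Ioo_subset_Icc_self ht)) (huδ t (Ioo_subset_Icc_self ht)).le]
  exact hXd' t ⟨ht.1, ht.2.trans_le hτT⟩

end

/-! ### Expansion of the second family along a backward characteristic -/

section
variable {p : ℝ → ℝ} {u v : ℝ × ℝ → ℝ} {x : ℝ → ℝ} {t₁ : ℝ}

lemma Sol.q_curve (h : Sol p u v) {X : ℝ → ℝ} {t : ℝ}
    (hX : HasDerivAt X (1 * aa p (u (t, X t))) t) :
    HasDerivAt (fun s => qfun p (u (s, X s)))
      (bb p (u (t, X t)) * zz p u v (-1) (t, X t)) t := by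
  have h2 := (h.qfun_deriv (u (t, X t))).comp t (hasDerivAt_curve (h.hud (t, X t)) hX)
  refine h2.congr_deriv ?_
  have h5 := bb_sq (p := p) (u (t, X t))
  rw [h.sys1]
  unfold zz ww
  rw [← h5]; ring

/-- If the weighted slope of the first family is negative on a backward characteristic, then
`-1/z` is positive and increasing with derivative `k`, so its oscillation is small near `-∞`. When
`u` keeps returning above `-M`, it must therefore drop from `-M` to `-M-1` within a small amount of
`∫ k`, which forces arbitrarily large slopes of the second family. -/
lemma Sol.upstretch (h : Sol p u v) (hx : ∀ s, IsChar p u 1 x s t₁)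
    (hz : zz p u v 1 (t₁, x t₁) < 0) {M : ℝ} (hM0 : 0 < M)
    (hM : ∃ᶠ t in atBot, -M ≤ u (t, x t)) (Y T : ℝ) :
    ∃ t ≤ T, t < t₁ ∧ -(M + 1) ≤ u (t, x t) ∧ Y ≤ zz p u v (-1) (t, x t) := by
  wlog hY : 0 < Y generalizing Y
  · obtain ⟨t, h1, h2, h3, h4⟩ := this 1 one_pos
    exact ⟨t, h1, h2, h3, by linarith⟩
  have hzt : ∀ t ≤ t₁, zz p u v 1 (t, x t) < 0 := fun t ht =>
    ((hx t).zz_le h (by norm_num) le_rfl ht le_rfl).trans_lt hz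
  set K : ℝ → ℝ := fun t => -(zz p u v 1 (t, x t))⁻¹ with hK
  have hKpos : ∀ t ≤ t₁, 0 < K t := fun t ht => neg_pos.2 (inv_lt_zero.2 (hzt t ht))
  have hKc : ∀ s t, t ≤ t₁ → ContinuousOn K (Icc s t) := fun s t ht =>
    ((((hx s).sub le_rfl ht).cont_comp (h.zz_cont 1)).inv₀
      (fun r hr => (hzt r (hr.2.trans ht)).ne)).neg
  have hKd : ∀ t < t₁, HasDerivAt K (kk p (u (t, x t))) t := by
    intro t ht
    have hne := (hzt t ht.le).ne
    have d1 := h.riccati (by norm_num) ((hx (t - 1)).der t ⟨by linarith, ht⟩)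
      ((hx t).neg t ⟨le_rfl, ht.le⟩)
    refine ((d1.fun_inv hne).fun_neg).congr_deriv ?_
    field_simp
  have hneg : ∀ t ≤ t₁, u (t, x t) < 0 := fun t ht => (hx t).neg t ⟨le_rfl, ht⟩
  have hKm : ∀ s t, s ≤ t → t ≤ t₁ → K s ≤ K t := by
    intro s t hst ht
    have := slope_le (κ := 0) hst (hKc s t ht) (fun r hr => hKd r (hr.2.trans_le ht))
      (fun r hr => (h.kk_pos (hneg r (hr.2.le.trans ht))).le)
    linarith
  obtain ⟨κ, hκ0, hκ⟩ := h.kk_lower (M + 1)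
  set B := bb p (-(M + 1)) with hB
  set C := B * Y / κ with hC
  have hC0 : 0 ≤ C := div_nonneg (mul_nonneg (bb_nonneg _) hY.le) hκ0.le
  have hCκ : C * κ = B * Y := div_mul_cancel₀ _ hκ0.ne'
  have hΔ := h.qfun_growth (x := -(M + 1)) (w := -M) (by linarith)
  have hΔ0 : 0 < aa p (-M) := h.aa_pos (by linarith)
  set Δ := qfun p (-(M + 1)) - qfun p (-M) with hΔd
  have hΔp : 0 < Δ := by linarith
  set η := min κ (Δ / (C + 1)) with hη
  have hη0 : 0 < η := lt_min hκ0 (by positivity)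
  have hCη : C * η < Δ := by
    have h1 : η * (C + 1) ≤ Δ := by
      rw [← le_div_iff₀ (by linarith)]; exact min_le_right _ _
    linarith
  -- the oscillation of `K` near `-∞` is less than `η`
  obtain ⟨T', hT'T, hT't, hosc⟩ : ∃ T', T' ≤ T ∧ T' < t₁ ∧
      ∀ s t, s ≤ t → t ≤ T' → K t - K s < η := by
    have hbdd : BddBelow (Set.image K (Iic t₁)) := ⟨0, by rintro _ ⟨t, ht, rfl⟩; exact (hKpos t ht).le⟩
    obtain ⟨_, ⟨a, ha, rfl⟩, hlt⟩ := exists_lt_of_csInf_lt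
      (show (Set.image K (Iic t₁)).Nonempty from ⟨K t₁, t₁, mem_Iic.2 le_rfl, rfl⟩) (lt_add_of_pos_right (sInf (Set.image K (Iic t₁))) hη0)
    refine ⟨min a (min T (t₁ - 1)), (min_le_right _ _).trans (min_le_left _ _),
      ((min_le_right _ _).trans (min_le_right _ _)).trans_lt (by linarith), fun s t hst ht => ?_⟩
    have h1 := hKm t a (ht.trans (min_le_left _ _)) ha
    have h2 : sInf (Set.image K (Iic t₁)) ≤ K s :=
      csInf_le hbdd ⟨s, (hst.trans (ht.trans (min_le_left _ _))).trans ha, rfl⟩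
    linarith
  obtain ⟨α, hα, hαT⟩ := (hM.and_eventually (eventually_le_atBot (T' - 1))).exists
  -- staying above `-(M + 1)` for a unit time would increase `K` by `κ ≥ η`
  obtain ⟨β₀, hβ₀, hβ₀u⟩ : ∃ t ∈ Icc α (α + 1), u (t, x t) ≤ -(M + 1) := by
    by_contra hcon
    push Not at hcon
    have h1 := slope_le (κ := κ) (show α ≤ α + 1 by linarith) (hKc _ _ (by linarith))
      (fun r hr => hKd r (by linarith [hr.2]))
      (fun r hr => hκ _ (hcon r (Ioo_subset_Icc_self hr)).le (hneg r (by linarith [hr.2])))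
    have h2 := hosc α (α + 1) (by linarith) (by linarith)
    have h3 : η ≤ κ := min_le_left _ _
    linarith
  have huc : ContinuousOn (fun t => u (t, x t)) (Icc α β₀) :=
    ((hx α).sub le_rfl (by linarith [hβ₀.2])).cont_comp h.hu.continuous
  obtain ⟨β, ⟨hβ1, hβ2⟩, hβ3⟩ := (isCompact_Icc.of_isClosed_subset
    (huc.preimage_isClosed_of_isClosed isClosed_Icc (isClosed_Iic (a := -(M + 1))))
    (fun t ht => ht.1)).exists_isLeast ⟨β₀, ⟨hβ₀.1, le_rfl⟩, hβ₀u⟩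
  have hβ2 : u (β, x β) ≤ -(M + 1) := hβ2
  have hin : ∀ t ∈ Ioo α β, -(M + 1) ≤ u (t, x t) := by
    intro t ht
    by_contra hc
    exact absurd (hβ3 ⟨⟨ht.1.le, ht.2.le.trans hβ1.2⟩, (not_le.1 hc).le⟩) (not_le.2 ht.2)
  have hβT : β ≤ T' := by linarith [hβ1.2, hβ₀.2]
  by_contra hcon
  push Not at hcon
  have hy : ∀ t ∈ Ioo α β, zz p u v (-1) (t, x t) < Y := fun t ht =>
    hcon t (by linarith [ht.2]) (by linarith [ht.2]) (hin t ht)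
  -- with `y < Y` throughout, `C K - q(u)` would increase on `[α, β]`, against `C η < Δ`
  have hs := slope_le (κ := 0) hβ1.1
    (f := fun t => C * K t - qfun p (u (t, x t)))
    (f' := fun t => C * kk p (u (t, x t)) - bb p (u (t, x t)) * zz p u v (-1) (t, x t))
    ((continuousOn_const.mul (hKc _ _ (hβT.trans hT't.le))).sub
      (((hx α).sub le_rfl (hβT.trans hT't.le)).cont_comp (h.qfun_cont.comp h.hu.continuous)))
    (fun t ht => ((hKd t (by linarith [ht.2])).const_mul C).fun_sub
      (h.q_curve ((hx α).der t ⟨ht.1, by linarith [ht.2]⟩)))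
    (fun t ht => by
      have h1 := mul_le_mul_of_nonneg_left (hκ _ (hin t ht) (hneg t (by linarith [ht.2]))) hC0
      have h2 := mul_le_mul_of_nonneg_left (hy t ht).le (bb_nonneg (p := p) (u (t, x t)))
      have h3 := mul_le_mul_of_nonneg_right (h.bb_anti (hin t ht)) hY.le
      linarith)
  have h1 := mul_le_mul_of_nonneg_left (hosc α β hβ1.1 hβT).le hC0
  have h2 := h.qfun_anti hβ2
  have h3 := h.qfun_anti hα
  linarith

end

/-! ### Extremum principles on lens-shaped regions -/

/-- The closed region between the graphs of `l` and `r` over `[a, b]`. -/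
def lens (l r : ℝ → ℝ) (a b : ℝ) : Set (ℝ × ℝ) :=
  {z | z.1 ∈ Icc a b ∧ l z.1 ≤ z.2 ∧ z.2 ≤ r z.1}

lemma lens_compact {l r : ℝ → ℝ} {a b : ℝ} (hl : ContinuousOn l (Icc a b))
    (hr : ContinuousOn r (Icc a b)) : IsCompact (lens l r a b) := by
  obtain ⟨A, hA⟩ := isCompact_Icc.exists_bound_of_continuousOn hl
  obtain ⟨B, hB⟩ := isCompact_Icc.exists_bound_of_continuousOn hr
  have hbox : IsCompact (Icc a b ×ˢ Icc (-A) B) := isCompact_Icc.prod isCompact_Icc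
  have hmap : MapsTo Prod.fst (Icc a b ×ˢ Icc (-A) B) (Icc a b) := fun z hz => hz.1
  have c1 : ContinuousOn (fun z : ℝ × ℝ => z.2 - l z.1) (Icc a b ×ˢ Icc (-A) B) :=
    continuousOn_snd.sub (hl.comp continuousOn_fst hmap)
  have c2 : ContinuousOn (fun z : ℝ × ℝ => r z.1 - z.2) (Icc a b ×ˢ Icc (-A) B) :=
    (hr.comp continuousOn_fst hmap).sub continuousOn_snd
  refine hbox.of_isClosed_subset (s := _) (t := _) ?_ (fun z hz => ⟨hz.1, ?_, ?_⟩)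
  · have := (c1.preimage_isClosed_of_isClosed hbox.isClosed (isClosed_Ici (a := 0))).inter
      (c2.preimage_isClosed_of_isClosed hbox.isClosed (isClosed_Ici (a := 0)))
    convert this using 1
    ext z
    simp only [lens, mem_inter_iff, mem_preimage, mem_Ici, sub_nonneg, mem_ofPred_eq, mem_prod]
    constructor
    · rintro ⟨h1, h2, h3⟩
      have := (abs_le.1 (hA _ h1)).1
      have := (abs_le.1 (hB _ h1)).2
      have h4 : z.2 ∈ Icc (-A) B := ⟨by linarith, by linarith⟩
      exact ⟨⟨⟨h1, h4⟩, h2⟩, ⟨h1, h4⟩, h3⟩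
    · rintro ⟨⟨⟨h1, _⟩, h2⟩, -, h3⟩
      exact ⟨h1, h2, h3⟩
  · have := (abs_le.1 (hA _ hz.1)).1
    linarith [hz.2.1]
  · have := (abs_le.1 (hB _ hz.1)).2
    linarith [hz.2.2]

lemma second_deriv_nonpos {f f' : ℝ → ℝ} {a c : ℝ} (hf : ∀ t, HasDerivAt f (f' t) t)
    (hf' : HasDerivAt f' c a) (hmax : IsLocalMax f a) : c ≤ 0 := by
  by_contra hc
  push Not at hc
  have e : deriv f = f' := funext fun t => (hf t).deriv
  have hmin : IsLocalMin f a := by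
    refine isLocalMin_of_deriv_deriv_pos ?_ ?_ (hf a).continuousAt
    · rwa [e, hf'.deriv]
    · rw [(hf a).deriv]; exact hmax.hasDerivAt_eq_zero (hf a)
  have hconst : f =ᶠ[𝓝 a] fun _ => f a := by
    filter_upwards [hmin, hmax] with t h1 h2 using le_antisymm h2 h1
  have h1 := hconst.deriv
  rw [e] at h1
  have h2 := h1.deriv_eq
  rw [hf'.deriv] at h2
  simp at h2
  linarith

section
variable {p : ℝ → ℝ} {u v : ℝ × ℝ → ℝ} {l r : ℝ → ℝ} {a b : ℝ}

lemma Sol.pt_pt (h : Sol p u v) (P : ℝ × ℝ) :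
    pt (pt u) P = -(deriv (deriv p) (u P) * px u P ^ 2 + deriv p (u P) * px (px u) P) := by
  rw [← h.px_pt_v, ← pt_px_comm h.hv]
  have e : pt u = fun z => -px v z := funext h.sys1
  have hd : DifferentiableAt ℝ (px v) P := (contDiff_px h.hv).differentiable one_ne_zero P
  rw [e]
  unfold pt
  rw [fderiv_fun_neg]
  rfl

/-- In the region `u > 0` the system is elliptic, so `u` has no positive interior maximum. -/
lemma Sol.max_principle (h : Sol p u v) (hl : ContinuousOn l (Icc a b))
    (hr : ContinuousOn r (Icc a b)) (hla : l a = r a) (hlb : l b = r b)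
    (hul : ∀ t ∈ Icc a b, u (t, l t) < 0) (hur : ∀ t ∈ Icc a b, u (t, r t) < 0) :
    ∀ z ∈ lens l r a b, u z ≤ 0 := by
  intro z₀ hz₀
  by_contra hcon
  push Not at hcon
  set D := (b - a) ^ 2 with hD
  set e := u z₀ / (D + 1) with he
  have hD0 : 0 ≤ D := sq_nonneg _
  have he0 : 0 < e := by positivity
  have heD : e * (D + 1) = u z₀ := div_mul_cancel₀ _ (by positivity)
  -- the perturbation `e (t - a)²` makes the interior maximum strict for the elliptic operator
  set f : ℝ × ℝ → ℝ := fun z => u z + e * (z.1 - a) ^ 2 with hf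
  have hfc : Continuous f := h.hu.continuous.add (by fun_prop)
  obtain ⟨z, hz, hzmax⟩ := (lens_compact hl hr).exists_isMaxOn ⟨z₀, hz₀⟩ hfc.continuousOn
  have huz : 0 < u z := by
    have h1 : f z₀ ≤ f z := hzmax hz₀
    have h2 : (z.1 - a) ^ 2 ≤ D := pow_le_pow_left₀ (by linarith [hz.1.1]) (by linarith [hz.1.2]) 2
    have h3 := mul_le_mul_of_nonneg_left h2 he0.le
    have h4 : 0 ≤ e * (z₀.1 - a) ^ 2 := by positivity
    simp only [hf] at h1
    linarith
  have hxl : l z.1 < z.2 := by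
    refine lt_of_le_of_ne hz.2.1 fun hh => ?_
    have := hul z.1 hz.1
    rw [hh] at this
    exact absurd this (not_lt.2 huz.le)
  have hxr : z.2 < r z.1 := by
    refine lt_of_le_of_ne hz.2.2 fun hh => ?_
    have := hur z.1 hz.1
    rw [← hh] at this
    exact absurd this (not_lt.2 huz.le)
  have hta : a < z.1 := lt_of_le_of_ne hz.1.1 fun hh => by rw [← hh] at hxl hxr; linarith
  have htb : z.1 < b := lt_of_le_of_ne hz.1.2 fun hh => by rw [hh] at hxl hxr; linarith
  have hnhds : lens l r a b ∈ 𝓝 z := by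
    have hI : Icc a b ∈ 𝓝 z.1 := Icc_mem_nhds hta htb
    have c1 : ContinuousAt (fun y : ℝ × ℝ => l y.1) z :=
      ContinuousAt.comp (f := Prod.fst) (hl.continuousAt hI) continuousAt_fst
    have c2 : ContinuousAt (fun y : ℝ × ℝ => r y.1) z :=
      ContinuousAt.comp (f := Prod.fst) (hr.continuousAt hI) continuousAt_fst
    filter_upwards [continuousAt_fst.preimage_mem_nhds hI, c1.eventually_lt continuousAt_snd hxl,
      (continuousAt_snd (p := z)).eventually_lt c2 hxr] with y h1 h2 h3
    exact ⟨h1, h2.le, h3.le⟩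
  have hloc : IsLocalMax f z := hzmax.isLocalMax hnhds
  have hlx : IsLocalMax (fun y => u (z.1, y)) z.2 := by
    have hc : ContinuousAt (fun y : ℝ => (z.1, y)) z.2 := by fun_prop
    filter_upwards [hc.eventually hloc] with y hy
    simp only [hf] at hy
    linarith
  have hlt : IsLocalMax (fun s => u (s, z.2) + e * (s - a) ^ 2) z.1 := by
    have hc : ContinuousAt (fun s : ℝ => (s, z.2)) z.1 := by fun_prop
    filter_upwards [hc.eventually hloc] with s hs
    simpa only [hf] using hs
  have hpx : px u z = 0 := hlx.hasDerivAt_eq_zero (hasDerivAt_px (h.hud z))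
  have hdx := (contDiff_px h.hu).differentiable one_ne_zero
  have hdt := (contDiff_pt h.hu).differentiable one_ne_zero
  have hxx : px (px u) z ≤ 0 :=
    second_deriv_nonpos (fun y => hasDerivAt_px (h.hud (z.1, y))) (hasDerivAt_px (hdx z)) hlx
  have htt : pt (pt u) z + e * 2 ≤ 0 := by
    refine second_deriv_nonpos (f' := fun s => pt u (s, z.2) + e * (2 * (s - a))) (fun s => ?_)
      ((hasDerivAt_pt (hdt z)).add ?_) hlt
    · refine (hasDerivAt_pt (h.hud (s, z.2))).add ?_
      have := (((hasDerivAt_id s).sub_const a).pow 2).const_mul e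
      refine this.congr_deriv ?_
      simp
    · have := (((hasDerivAt_id z.1).sub_const a).const_mul 2).const_mul e
      exact this.congr_deriv (by simp)
  have hdp := h.dp_mono huz
  rw [h.hp0] at hdp
  rw [h.pt_pt, hpx] at htt
  nlinarith [mul_nonneg hdp.le (neg_nonneg.2 hxx)]

/-- Where `u ≤ 0` the invariant `v - q(u)` is transported with speed `√(-p'(u))`, so its minimum
over a lens is attained where the backward transport direction leaves the lens. -/
lemma Sol.min_principle (h : Sol p u v) (hl : ContinuousOn l (Icc a b))
    (hr : ContinuousOn r (Icc a b)) (hneg : ∀ z ∈ lens l r a b, u z ≤ 0) {m : ℝ}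
    (hm : ∀ z ∈ lens l r a b, m ≤ rr p u v 1 z ∨
      ∀ᶠ s in 𝓝[<] z.1, (s, z.2 + aa p (u z) * (s - z.1)) ∈ lens l r a b) :
    ∀ z ∈ lens l r a b, m ≤ rr p u v 1 z := by
  intro z₀ hz₀
  by_contra hcon
  push Not at hcon
  have hab : 0 ≤ b - a := by linarith [hz₀.1.1, hz₀.1.2]
  set e := (m - rr p u v 1 z₀) / (b - a + 1) with he
  have he0 : 0 < e := div_pos (by linarith) (by linarith)
  have heD : e * (b - a + 1) = m - rr p u v 1 z₀ := div_mul_cancel₀ _ (by linarith)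
  set f : ℝ × ℝ → ℝ := fun z => rr p u v 1 z + e * (z.1 - a) with hf
  have hfc : Continuous f := (h.rr_cont 1).add (by fun_prop)
  obtain ⟨z, hz, hzmin⟩ := (lens_compact hl hr).exists_isMinOn ⟨z₀, hz₀⟩ hfc.continuousOn
  rcases hm z hz with h1 | h1
  · have h2 : f z ≤ f z₀ := hzmin hz₀
    have h3 : 0 ≤ e * (z.1 - a) := mul_nonneg he0.le (by linarith [hz.1.1])
    have h4 : e * (z₀.1 - a) ≤ e * (b - a) :=
      mul_le_mul_of_nonneg_left (by linarith [hz₀.1.2]) he0.le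
    simp only [hf] at h2
    linarith
  · set X : ℝ → ℝ := fun s => z.2 + aa p (u z) * (s - z.1) with hX
    have hXz : (z.1, X z.1) = z := by simp [hX]
    have hXd : HasDerivAt X (aa p (u z)) z.1 := by
      have := (((hasDerivAt_id z.1).sub_const z.1).const_mul (aa p (u z))).const_add z.2
      exact this.congr_deriv (by simp)
    have hd := h.rr_curve (ε := 1) (by norm_num) hXd (by rw [hXz]; exact hneg z hz)
    have hd2 : HasDerivAt (fun s => f (s, X s)) e z.1 := by
      have := hd.add (((hasDerivAt_id z.1).sub_const a).const_mul e)
      refine this.congr_deriv ?_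
      rw [hXz]; ring
    have hs := (hasDerivAt_iff_tendsto_slope.1 hd2).mono_left
      (nhdsWithin_mono z.1 (fun s (hs : s < z.1) => (ne_of_lt hs : s ≠ z.1)))
    obtain ⟨s, ⟨hs1, hs2⟩, hs3⟩ := ((h1.and (hs.eventually (lt_mem_nhds he0))).and
      self_mem_nhdsWithin).exists
    have hs3 : s < z.1 := hs3
    have h2 : f z ≤ f (s, X s) := hzmin hs1
    rw [slope_def_field, hXz] at hs2
    have := div_nonpos_of_nonneg_of_nonpos (sub_nonneg.2 h2) (sub_nonpos.2 hs3.le)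
    linarith

end

/-! ### Gluing of curves -/

/-- The curve `f` up to time `b`, followed by `g`. -/
noncomputable def glue (b : ℝ) (f g : ℝ → ℝ) (t : ℝ) : ℝ := if t ≤ b then f t else g t

lemma glue_left {b t : ℝ} {f g : ℝ → ℝ} (h : t ≤ b) : glue b f g t = f t := if_pos h

lemma glue_right {b t : ℝ} {f g : ℝ → ℝ} (hfg : f b = g b) (h : b ≤ t) : glue b f g t = g t := by
  rcases h.eq_or_lt with rfl | h
  · rw [glue_left le_rfl, hfg]
  · exact if_neg (not_le.2 h)

lemma glue_cont {a b c : ℝ} {f g : ℝ → ℝ} (hab : a ≤ b) (hbc : b ≤ c) (hfg : f b = g b)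
    (hf : ContinuousOn f (Icc a b)) (hg : ContinuousOn g (Icc b c)) :
    ContinuousOn (glue b f g) (Icc a c) := by
  rw [← Icc_union_Icc_eq_Icc hab hbc]
  exact (hf.congr fun t ht => glue_left ht.2).union_of_isClosed
    (hg.congr fun t ht => glue_right hfg ht.1) isClosed_Icc isClosed_Icc

lemma glue_anti {a b c : ℝ} {f g : ℝ → ℝ} (hab : a ≤ b) (hbc : b ≤ c) (hfg : f b = g b)
    (hf : AntitoneOn f (Icc a b)) (hg : AntitoneOn g (Icc b c)) :
    AntitoneOn (glue b f g) (Icc a c) := by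
  rw [← Icc_union_Icc_eq_Icc hab hbc]
  exact AntitoneOn.union_right (hf.congr fun t ht => (glue_left ht.2).symm)
    (hg.congr fun t ht => (glue_right hfg ht.1).symm) (isGreatest_Icc hab) (isLeast_Icc hbc)

lemma first_hit {f : ℝ → ℝ} {a b : ℝ} (hf : ContinuousOn f (Icc a b)) (ha : 0 < f a)
    (hex : ∃ t ∈ Icc a b, f t ≤ 0) :
    ∃ c, a < c ∧ c ≤ b ∧ f c = 0 ∧ ∀ t, a ≤ t → t < c → 0 < f t := by
  obtain ⟨c, ⟨hc1, hc2⟩, hc3⟩ := (isCompact_Icc.of_isClosed_subset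
    (hf.preimage_isClosed_of_isClosed isClosed_Icc (isClosed_Iic (a := 0)))
    (fun t ht => ht.1)).exists_isLeast hex
  have hc2 : f c ≤ 0 := hc2
  have hbefore : ∀ t, a ≤ t → t < c → 0 < f t := by
    intro t h1 h2
    by_contra hcon
    exact absurd (hc3 ⟨⟨h1, h2.le.trans hc1.2⟩, not_lt.1 hcon⟩) (not_le.2 h2)
  obtain ⟨d, hd, hd0⟩ := intermediate_value_Icc' hc1.1
    (hf.mono (Icc_subset_Icc le_rfl hc1.2)) ⟨hc2, ha.le⟩
  have hdc : d = c := by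
    by_contra hne
    have := hbefore d hd.1 (lt_of_le_of_ne hd.2 hne)
    linarith
  subst hdc
  refine ⟨d, lt_of_le_of_ne hd.1 ?_, hc1.2, hd0, hbefore⟩
  rintro rfl
  linarith

section
variable {p : ℝ → ℝ} {u v : ℝ × ℝ → ℝ} {x : ℝ → ℝ} {t₁ : ℝ}

/-! ### The four sides of the lens -/

/-- A 2-characteristic with positive weighted slope enters, in finite time, a region where the
first Riemann invariant is strictly smaller. -/
lemma Sol.drop (h : Sol p u v) {ts xs : ℝ} (hu0 : u (ts, xs) < 0)
    (hy : 0 < zz p u v (-1) (ts, xs)) :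
    ∃ τ X, ts < τ ∧ X ts = xs ∧ IsChar p u (-1) X ts τ ∧
      rr p u v 1 (τ, X τ) < rr p u v 1 (ts, xs) := by
  set L := -u (ts, xs) + 1 with hL
  obtain ⟨κ, hκ0, hκ⟩ := h.kk_lower L
  set y := zz p u v (-1) (ts, xs) with hyd
  -- a time span exceeding the Riccati blow-up time in the range `u ≥ -L`
  have hlen : κ * ((1 / y + 1) / κ) = 1 / y + 1 := mul_div_cancel₀ _ hκ0.ne'
  have hlen0 : 0 < (1 / y + 1) / κ := by positivity
  obtain ⟨τ, X, h1, h2, h3, h4, h5, h6⟩ := h.extend (ε := -1) (by norm_num)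
    (T := ts + (1 / y + 1) / κ) (L := L) (by linarith) (by linarith) hu0 hy
  refine ⟨τ, X, h1, h3, h4, ?_⟩
  rcases h6 with h6 | h6
  · have := h4.recip h h1.le (by rw [h3]; exact hy) (κ := κ) (μ := 0) (fun t ht => by
      have := hκ _ (h5 t (Ioo_subset_Icc_self ht)) (h4.neg t (Ioo_subset_Icc_self ht))
      linarith)
    rw [h3, h6, ← hyd] at this
    linarith
  · have hS := h4.rr_const h (by norm_num) ⟨h1.le, le_rfl⟩
    rw [h3] at hS
    have hg := h.qfun_growth (x := -L) (w := u (ts, xs)) (by linarith)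
    have ha := h.aa_pos hu0
    have e : u (ts, xs) - -L = 1 := by rw [hL]; ring
    rw [e] at hg
    unfold rr at hS ⊢
    rw [h6] at hS ⊢
    linarith

/-- Far back in time, a 2-characteristic issued from the given curve develops a large weighted
slope `Z` of the first family before the first invariant has dropped by `d`: otherwise it would
have to break down within a short time while staying in a bounded range of `u`. -/
lemma Sol.far_left (h : Sol p u v) (hx : ∀ s, IsChar p u 1 x s t₁)
    (hz : zz p u v 1 (t₁, x t₁) < 0) {M : ℝ} (hM0 : 0 < M)
    (hM : ∃ᶠ t in atBot, -M ≤ u (t, x t)) {Z d : ℝ} (hZ : 0 < Z) (hd : 0 < d) (ts : ℝ) :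
    ∃ tn tP X, tn < tP ∧ tP < ts ∧ IsChar p u (-1) X tn tP ∧ X tn = x tn ∧
      Z ≤ zz p u v 1 (tP, X tP) ∧
      ∀ t ∈ Icc tn tP, rr p u v 1 (tn, x tn) - d ≤ rr p u v 1 (t, X t) := by
  have ha := h.aa_pos (w := -(M + 1)) (by linarith)
  set L := M + 1 + (d + 1) / aa p (-(M + 1)) with hL
  have hLM : M + 1 < L := by
    have : 0 < (d + 1) / aa p (-(M + 1)) := by positivity
    linarith
  have hqL := h.qfun_growth (x := -L) (w := -(M + 1)) (by linarith)
  have e1 : aa p (-(M + 1)) * (-(M + 1) - -L) = d + 1 := by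
    rw [hL]; field_simp; ring
  rw [e1] at hqL
  set B := bb p (-L) with hB
  have hB0 : 0 < B := h.bb_pos (by linarith)
  set δ := d / (2 * B * Z) with hδ
  have hδ0 : 0 < δ := by positivity
  have e2 : 2 * B * Z * δ = d := mul_div_cancel₀ _ (by positivity)
  obtain ⟨κ, hκ0, hκ⟩ := h.kk_lower L
  obtain ⟨tn, htn1, htn2, htn3, htn4⟩ := h.upstretch hx hz hM0 hM (2 / (κ * δ)) (ts - δ - 1)
  have hun : u (tn, x tn) < 0 := (hx tn).neg tn ⟨le_rfl, htn2.le⟩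
  have hy0 : 0 < zz p u v (-1) (tn, x tn) := lt_of_lt_of_le (by positivity) htn4
  have hy1 : 1 / zz p u v (-1) (tn, x tn) ≤ κ * δ / 2 := by
    have := one_div_le_one_div_of_le (by positivity) htn4
    rwa [one_div_div] at this
  obtain ⟨τ, X, h1, h2, h3, h4, h5, h6⟩ := h.extend (ε := -1) (by norm_num)
    (T := tn + δ) (L := L) (by linarith) (by linarith) hun hy0
  have hBt : ∀ t ∈ Icc tn τ, bb p (u (t, X t)) ≤ B := fun t ht => h.bb_anti (h5 t ht)
  have hlow : ∀ s, tn ≤ s → s ≤ τ → (∀ t, tn ≤ t → t < s → zz p u v 1 (t, X t) ≤ Z) →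
      rr p u v 1 (tn, x tn) - d ≤ rr p u v 1 (s, X s) := by
    intro s hs1 hs2 hs3
    have := (h4.sub le_rfl hs2).rr_lower h hs1 hZ.le (fun t ht => hs3 t ht.1.le ht.2)
      (fun t ht => hBt t ⟨ht.1.le, ht.2.le.trans hs2⟩)
    rw [h3] at this
    have h7 : 2 * B * Z * (s - tn) ≤ 2 * B * Z * δ :=
      mul_le_mul_of_nonneg_left (by linarith) (by positivity)
    linarith
  -- if `z` stays below `Z`, then `S` constant and `R` nearly constant keep `u` above `-L`, so the
  -- arc lives up to time `tn + δ`, beyond its blow-up time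
  have hex : ∃ t ∈ Icc tn τ, Z - zz p u v 1 (t, X t) ≤ 0 := by
    by_contra hcon
    push Not at hcon
    have hl := hlow τ h1.le le_rfl (fun t ht1 ht2 => by linarith [hcon t ⟨ht1, ht2.le⟩])
    have hS := h4.rr_const h (by norm_num) ⟨h1.le, le_rfl⟩
    rw [h3] at hS
    rcases h6 with h6 | h6
    · have := h4.recip h h1.le (by rw [h3]; exact hy0) (κ := κ) (μ := 0) (fun t ht => by
        have := hκ _ (h5 t (Ioo_subset_Icc_self ht)) (h4.neg t (Ioo_subset_Icc_self ht))
        linarith)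
      rw [h3, h6] at this
      have : 0 < κ * δ := by positivity
      linarith
    · have hq := h.qfun_anti htn3
      unfold rr at hS hl
      rw [h6] at hS hl
      linarith
  obtain ⟨tP, hP1, hP2, hP3, hP4⟩ := first_hit (f := fun t => Z - zz p u v 1 (t, X t))
    (continuousOn_const.sub (h4.cont_comp (h.zz_cont 1))) (by
      have := ((hx tn).zz_le h (by norm_num) le_rfl htn2.le le_rfl)
      rw [h3]
      linarith) hex
  refine ⟨tn, tP, X, hP1, by linarith, h4.sub le_rfl hP2, h3, by linarith, fun t ht => ?_⟩
  exact hlow t ht.1 (ht.2.trans hP2) (fun s hs1 hs2 => by linarith [hP4 s hs1 (by linarith [ht.2])])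

/-- The lower bound for `k` degenerates as `u → -∞`, but there the wave speed is large: an arc
of the second family that neither breaks down nor travels far has bounded lifetime. -/
lemma Sol.kk_add_aa (h : Sol p u v) : ∃ c > 0, ∀ w < 0, c ≤ kk p w + 1 * aa p w := by
  obtain ⟨κ, hκ0, hκ⟩ := h.kk_lower 1
  have ha := h.aa_pos (w := -1) (by norm_num)
  refine ⟨min κ (aa p (-1)), lt_min hκ0 ha, fun w hw => ?_⟩
  rcases le_total (-1) w with h1 | h1
  · have := hκ w h1 hw
    have := aa_nonneg (p := p) w
    have := min_le_left κ (aa p (-1))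
    linarith
  · have := h.aa_anti h1
    have := h.kk_pos hw
    have := min_le_right κ (aa p (-1))
    linarith

lemma IsChar.antitoneOn (h : Sol p u v) {X : ℝ → ℝ} {a b : ℝ} (hX : IsChar p u (-1) X a b) :
    AntitoneOn X (Icc a b) := by
  intro s hs t ht hst
  rcases hst.eq_or_lt with rfl | hlt
  · exact le_rfl
  · exact (hX.lt_of_neg h hs.1 hlt ht.2).le

lemma IsChar.monotoneOn (h : Sol p u v) {X : ℝ → ℝ} {a b : ℝ} (hX : IsChar p u 1 X a b) :
    MonotoneOn X (Icc a b) := by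
  intro s hs t ht hst
  rcases hst.eq_or_lt with rfl | hlt
  · exact le_rfl
  · exact (hX.lt_of_pos h hs.1 hlt ht.2).le

end

/-! ### The lens argument -/

section
variable {p : ℝ → ℝ} {u v : ℝ × ℝ → ℝ} {x : ℝ → ℝ}

/-- The lens is bounded on the left by the 2-characteristic `X` followed by the 1-characteristic
`G`, on the right by the 1-characteristic `x` followed by a decreasing curve `g`. A lower bound
for the first invariant on `X` carries over to `g`. -/
lemma Sol.lens_bound (h : Sol p u v) {X G g : ℝ → ℝ} {tn tP ts Tc m : ℝ}
    (h1 : tn < tP) (h2 : tP < ts) (h3 : ts < Tc)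
    (hX : IsChar p u (-1) X tn tP) (hG : IsChar p u 1 G tP Tc) (hx : IsChar p u 1 x tn ts)
    (hXx : X tn = x tn) (hXG : X tP = G tP)
    (hgc : ContinuousOn g (Icc ts Tc)) (hga : AntitoneOn g (Icc ts Tc))
    (hgu : ∀ t ∈ Icc ts Tc, u (t, g t) < 0) (hxg : x ts = g ts) (hGg : G Tc = g Tc)
    (hGgle : ∀ t ∈ Icc ts Tc, G t ≤ g t)
    (hm : ∀ t ∈ Icc tn tP, m ≤ rr p u v 1 (t, X t)) :
    ∀ t ∈ Icc ts Tc, m ≤ rr p u v 1 (t, g t) := by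
  set l := glue tP X G with hl
  set r := glue ts x g with hr
  have hlc : ContinuousOn l (Icc tn Tc) := glue_cont h1.le (h2.trans h3).le hXG hX.cont hG.cont
  have hrc : ContinuousOn r (Icc tn Tc) := glue_cont (h1.trans h2).le h3.le hxg hx.cont hgc
  have l1 : ∀ t, t ≤ tP → l t = X t := fun t ht => glue_left ht
  have l2 : ∀ t, tP ≤ t → l t = G t := fun t ht => glue_right hXG ht
  have r1 : ∀ t, t ≤ ts → r t = x t := fun t ht => glue_left ht
  have r2 : ∀ t, ts ≤ t → r t = g t := fun t ht => glue_right hxg ht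
  have hla : l tn = r tn := by rw [l1 _ h1.le, r1 _ (h1.trans h2).le, hXx]
  have hlb : l Tc = r Tc := by rw [l2 _ (h2.trans h3).le, r2 _ h3.le, hGg]
  have hneg := h.max_principle hlc hrc hla hlb
    (fun t ht => by
      rcases le_total t tP with h4 | h4
      · rw [l1 t h4]; exact hX.neg t ⟨ht.1, h4⟩
      · rw [l2 t h4]; exact hG.neg t ⟨h4, ht.2⟩)
    (fun t ht => by
      rcases le_total t ts with h4 | h4
      · rw [r1 t h4]; exact hx.neg t ⟨ht.1, h4⟩
      · rw [r2 t h4]; exact hgu t ⟨h4, ht.2⟩)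
  have hmin := h.min_principle hlc hrc hneg (m := m) ?_
  · intro t ht
    refine hmin (t, g t) ⟨⟨by linarith [ht.1], ht.2⟩, ?_, ?_⟩
    · rw [l2 t (by linarith [ht.1])]; exact hGgle t ht
    · rw [r2 t ht.1]
  rintro ⟨t, y⟩ ⟨ht, hly, hyr⟩
  simp only at ht hly hyr ⊢
  -- on the left side and on `x` the bound is known; elsewhere the backward transport direction
  -- stays inside, on `g` because `g` is decreasing
  rcases hly.eq_or_lt with rfl | hly
  · left
    rcases le_total t tP with h4 | h4
    · rw [l1 t h4]; exact hm t ⟨ht.1, h4⟩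
    · rw [l2 t h4, hG.rr_const h (by norm_num) ⟨h4, ht.2⟩, ← hXG]
      exact hm tP ⟨h1.le, le_rfl⟩
  have htn : tn < t := lt_of_le_of_ne ht.1 fun hh => by rw [← hh] at hly hyr; linarith
  have hI : Icc tn Tc ∈ 𝓝[<] t :=
    mem_of_superset (Ioo_mem_nhdsLT htn) fun s hs => ⟨hs.1.le, hs.2.le.trans ht.2⟩
  have hle : 𝓝[<] t ≤ 𝓝[Icc tn Tc] t := nhdsWithin_le_of_mem hI
  have hline : Tendsto (fun s => y + aa p (u (t, y)) * (s - t)) (𝓝[<] t) (𝓝 y) := by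
    have hc : ContinuousAt (fun s => y + aa p (u (t, y)) * (s - t)) t := by fun_prop
    have := hc.tendsto.mono_left (nhdsWithin_le_nhds (s := Iio t))
    simpa using this
  have hleft : ∀ᶠ s in 𝓝[<] t, l s < y + aa p (u (t, y)) * (s - t) :=
    ((hlc t ht).mono_left hle).eventually_lt hline hly
  rcases le_or_gt t ts with h5 | h5
  · rcases hyr.eq_or_lt with rfl | hyr
    · left
      rw [r1 t h5, hx.rr_const h (by norm_num) ⟨ht.1, h5⟩, ← hXx]
      exact hm tn ⟨le_rfl, h1.le⟩
    · right
      filter_upwards [hI, hleft, hline.eventually_lt ((hrc t ht).mono_left hle) hyr] with s a b c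
      exact ⟨a, b.le, c.le⟩
  · right
    filter_upwards [hI, hleft, Ioo_mem_nhdsLT h5] with s a b c
    refine ⟨a, b.le, ?_⟩
    have h6 : 0 ≤ aa p (u (t, y)) * (t - s) := mul_nonneg (aa_nonneg _) (by linarith [c.2])
    have h7 := hga ⟨c.1.le, a.2⟩ ⟨h5.le, ht.2⟩ c.2.le
    rw [r2 t h5.le] at hyr
    simp only
    rw [r2 s c.1.le]
    linarith

/-- The 1-characteristic issued from a point on the left with large weighted slope `Z` meets the
continuation of the 2-characteristic `C`, and does so only after `C` has ended, because on `x` and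
on `C` the slope stays below `Z`. -/
lemma Sol.crossing (h : Sol p u v) {C : ℝ → ℝ} {tP xP ts τ₁ Z : ℝ}
    (hPs : tP < ts) (hsτ : ts < τ₁) (hx : IsChar p u 1 x tP ts)
    (hxz : ∀ t ∈ Icc tP ts, zz p u v 1 (t, x t) < Z)
    (hC : IsChar p u (-1) C ts τ₁) (hxC : x ts = C ts)
    (hCy : 0 < zz p u v (-1) (ts, C ts)) (hCz : ∀ t ∈ Icc ts τ₁, zz p u v 1 (t, C t) < Z)
    (hZ : 0 < Z) (hPu : u (tP, xP) < 0) (hPZ : Z ≤ zz p u v 1 (tP, xP)) (hPx : xP < x tP) :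
    ∃ G g Tc, τ₁ < Tc ∧ IsChar p u 1 G tP Tc ∧ G tP = xP ∧
      ContinuousOn g (Icc ts Tc) ∧ AntitoneOn g (Icc ts Tc) ∧
      (∀ t ∈ Icc ts Tc, u (t, g t) < 0) ∧ (∀ t ∈ Icc ts τ₁, g t = C t) ∧ G Tc = g Tc ∧
      ∀ t ∈ Icc ts Tc, G t ≤ g t := by
  obtain ⟨c, hc0, hc⟩ := h.kk_add_aa
  have hy : 0 < zz p u v (-1) (τ₁, C τ₁) :=
    hCy.trans_le (hC.zz_le h (by norm_num) le_rfl hsτ.le le_rfl)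
  have huC : u (τ₁, C τ₁) < 0 := hC.neg _ ⟨hsτ.le, le_rfl⟩
  set y := zz p u v (-1) (τ₁, C τ₁) with hyd
  have hxm : x tP < x ts := hx.lt_of_pos h le_rfl hPs le_rfl
  -- by then the continuation of `C` has either broken down or passed to the left of `xP`
  set len := (1 / y + (x ts - xP)) / c + 1 with hlen
  have hlen0 : 0 < len := by
    have : 0 < x ts - xP := by linarith
    positivity
  have hclen : c * len = 1 / y + (x ts - xP) + c := by rw [hlen]; field_simp
  set T := τ₁ + len with hT
  obtain ⟨A, hA⟩ := ((isCompact_Icc (a := tP) (b := T)).prod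
    (isCompact_Icc (a := xP) (b := x ts))).exists_bound_of_continuousOn h.hu.continuous.continuousOn
  -- the level `-L` is out of reach inside the box `[tP, T] × [xP, x ts]`
  set L := max (A + 1) (-u (τ₁, C τ₁) + 1) with hL
  have hbox : ∀ t z, tP ≤ t → t ≤ T → xP ≤ z → z ≤ x ts → -L < u (t, z) := by
    intro t z a1 a2 a3 a4
    have := (abs_le.1 (hA (t, z) ⟨⟨a1, a2⟩, a3, a4⟩)).1
    have := le_max_left (A + 1) (-u (τ₁, C τ₁) + 1)
    linarith
  obtain ⟨τG, G, g1, g2, g3, g4, -, g6⟩ := h.extend (ε := 1) (by norm_num) (ts := tP) (xs := xP)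
    (T := T) (L := L) (by linarith) (hbox _ _ le_rfl (by linarith) le_rfl (by linarith)) hPu
    (by linarith)
  obtain ⟨τC, D, d1, d2, d3, d4, -, d6⟩ := h.extend (ε := -1) (by norm_num) (ts := τ₁) (xs := C τ₁)
    (T := T) (L := L) (by linarith)
    (by have := le_max_right (A + 1) (-u (τ₁, C τ₁) + 1); linarith) huC hy
  set g := glue τ₁ C D with hg
  have e1 : ∀ t, t ≤ τ₁ → g t = C t := fun t ht => glue_left ht
  have e2 : ∀ t, τ₁ ≤ t → g t = D t := fun t ht => glue_right d3.symm ht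
  have hgc : ContinuousOn g (Icc ts τC) := glue_cont hsτ.le d1.le d3.symm hC.cont d4.cont
  have hga : AntitoneOn g (Icc ts τC) :=
    glue_anti hsτ.le d1.le d3.symm (hC.antitoneOn h) (d4.antitoneOn h)
  have hgu : ∀ t ∈ Icc ts τC, u (t, g t) < 0 := by
    intro t ht
    rcases le_total t τ₁ with a | a
    · rw [e1 t a]; exact hC.neg t ⟨ht.1, a⟩
    · rw [e2 t a]; exact d4.neg t ⟨a, ht.2⟩
  have hxg : x ts = g ts := by rw [e1 ts hsτ.le, hxC]
  set r := glue ts x g with hr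
  have r1 : ∀ t, t ≤ ts → r t = x t := fun t ht => glue_left ht
  have r2 : ∀ t, ts ≤ t → r t = g t := fun t ht => glue_right hxg ht
  have hrc : ContinuousOn r (Icc tP τC) := glue_cont hPs.le (by linarith) hxg hx.cont hgc
  have hrle : ∀ t ∈ Icc tP τC, r t ≤ x ts := by
    intro t ht
    rcases le_total t ts with a | a
    · rw [r1 t a]; exact hx.monotoneOn h ⟨ht.1, a⟩ ⟨hPs.le, le_rfl⟩ a
    · rw [r2 t a, hxg]; exact hga ⟨le_rfl, by linarith⟩ ⟨a, ht.2⟩ a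
  have hGge : ∀ t ∈ Icc tP τG, xP ≤ G t := fun t ht => by
    rw [← g3]; exact g4.monotoneOn h ⟨le_rfl, g1.le⟩ ht ht.1
  have hex : ∃ t ∈ Icc tP (min τG τC), r t - G t ≤ 0 := by
    by_contra hcon
    push Not at hcon
    have hτC : τC = T := by
      rcases le_total τG τC with a | a
      · rw [min_eq_left a] at hcon
        have b := hcon τG ⟨g1.le, le_rfl⟩
        have b1 := hbox τG (G τG) g1.le g2 (hGge τG ⟨g1.le, le_rfl⟩)
          (by linarith [hrle τG ⟨g1.le, a⟩])
        rcases g6 with g6 | g6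
        · linarith
        · rw [g6] at b1; exact absurd b1 (lt_irrefl _)
      · rw [min_eq_right a] at hcon
        have b0 : tP ≤ τC := by linarith
        have b := hcon τC ⟨b0, le_rfl⟩
        have b1 := hbox τC (r τC) b0 d2 (by linarith [hGge τC ⟨b0, a⟩]) (hrle τC ⟨b0, le_rfl⟩)
        rw [r2 _ (by linarith), e2 _ d1.le] at b1
        rcases d6 with d6 | d6
        · exact d6
        · rw [d6] at b1; exact absurd b1 (lt_irrefl _)
    have hτG : xP ≤ D τC := by
      rcases le_total τG τC with a | a
      · rw [min_eq_left a] at hcon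
        have b := hcon τG ⟨g1.le, le_rfl⟩
        have b1 := hbox τG (G τG) g1.le g2 (hGge τG ⟨g1.le, le_rfl⟩)
          (by linarith [hrle τG ⟨g1.le, a⟩])
        rcases g6 with g6 | g6
        · have b2 := hGge τG ⟨g1.le, le_rfl⟩
          rw [hτC, ← g6, ← e2 _ (by linarith), ← r2 _ (by linarith)]
          linarith
        · rw [g6] at b1; exact absurd b1 (lt_irrefl _)
      · rw [min_eq_right a] at hcon
        have b0 : tP ≤ τC := by linarith
        have b := hcon τC ⟨b0, le_rfl⟩
        rw [← e2 _ d1.le, ← r2 _ (by linarith)]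
        linarith [hGge τC ⟨b0, a⟩]
    have hrec := d4.recip h d1.le (by rw [d3]; exact hy) (κ := c) (μ := 1)
      (fun t ht => hc _ (d4.neg t (Ioo_subset_Icc_self ht)))
    rw [d3, ← hyd] at hrec
    have a1 : C τ₁ ≤ x ts := by
      rw [hxC]; exact hC.antitoneOn h ⟨le_rfl, hsτ.le⟩ ⟨hsτ.le, le_rfl⟩ hsτ.le
    have a2 : τC - τ₁ = len := by rw [hτC, hT]; ring
    rw [a2, hclen] at hrec
    linarith
  obtain ⟨Tc, t1, t2, t3, t4⟩ := first_hit (f := fun t => r t - G t)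
    ((hrc.mono (Icc_subset_Icc le_rfl (min_le_right _ _))).sub
      (g4.cont.mono (Icc_subset_Icc le_rfl (min_le_left _ _))))
    (by rw [r1 _ hPs.le, g3]; linarith) hex
  have tG : Tc ≤ τG := t2.trans (min_le_left _ _)
  have tC : Tc ≤ τC := t2.trans (min_le_right _ _)
  have hzG : Z ≤ zz p u v 1 (Tc, G Tc) := by
    refine hPZ.trans ?_
    have := g4.zz_le h (by norm_num) le_rfl t1.le tG
    rwa [g3] at this
  have hrG : r Tc = G Tc := by linarith
  have hτT : τ₁ < Tc := by
    by_contra hcon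
    push Not at hcon
    rw [← hrG] at hzG
    rcases le_total Tc ts with a | a
    · rw [r1 _ a] at hzG
      linarith [hxz Tc ⟨t1.le, a⟩]
    · rw [r2 _ a, e1 _ hcon] at hzG
      linarith [hCz Tc ⟨a, hcon⟩]
  refine ⟨G, g, Tc, hτT, g4.sub le_rfl tG, g3, hgc.mono (Icc_subset_Icc le_rfl tC),
    hga.mono (Icc_subset_Icc le_rfl tC), fun t ht => hgu t ⟨ht.1, ht.2.trans tC⟩,
    fun t ht => e1 t ht.2, ?_, fun t ht => ?_⟩
  · rw [← hrG, r2 _ (by linarith)]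
  · rcases ht.2.eq_or_lt with rfl | hlt
    · rw [← hrG, r2 _ (by linarith)]
    · have := t4 t (by linarith [ht.1]) hlt
      rw [r2 t ht.1] at this
      linarith

/-- The first family: a negative slope at one time forces `u → -∞` backwards. The lens argument
is run with `d` half of the drop of the first invariant along `C`. -/
lemma Sol.main (h : Sol p u v) {t₁ : ℝ} (hx : ∀ s, IsChar p u 1 x s t₁)
    (hz : zz p u v 1 (t₁, x t₁) < 0) : Tendsto (fun t => -u (t, x t)) atBot atTop := by
  by_contra hcon
  obtain ⟨M, hM0, hM⟩ : ∃ M > 0, ∃ᶠ t in atBot, -M ≤ u (t, x t) := by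
    rw [tendsto_atTop] at hcon
    push Not at hcon
    obtain ⟨b, hb⟩ := hcon
    refine ⟨max b 1, by positivity, hb.mono fun t ht => ?_⟩
    have := le_max_left b 1
    linarith
  obtain ⟨ts, -, hs1, -, hs2⟩ := h.upstretch hx hz hM0 hM 1 t₁
  have hus : u (ts, x ts) < 0 := (hx ts).neg ts ⟨le_rfl, hs1.le⟩
  obtain ⟨τ₁, C, c1, c2, c3, c4⟩ := h.drop hus (by linarith)
  obtain ⟨A, hA⟩ := isCompact_Icc.exists_bound_of_continuousOn (c3.cont_comp (h.zz_cont 1))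
  have hxz : ∀ t ≤ t₁, zz p u v 1 (t, x t) < 0 := fun t ht =>
    ((hx t).zz_le h (by norm_num) le_rfl ht le_rfl).trans_lt hz
  set d := (rr p u v 1 (ts, x ts) - rr p u v 1 (τ₁, C τ₁)) / 2 with hd
  obtain ⟨tn, tP, X, x1, x2, x3, x4, x5, x6⟩ := h.far_left hx hz hM0 hM (Z := |A| + 1) (d := d)
    (by positivity) (by linarith) ts
  have hxn : IsChar p u 1 x tn ts := (hx tn).sub le_rfl hs1.le
  obtain ⟨G, g, Tc, k1, k2, k3, k4, k5, k6, k7, k8, k9⟩ := h.crossing x2 c1 (hxn.sub x1.le le_rfl)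
    (fun t ht => (hxz t (by linarith [ht.2])).trans (by positivity)) c3 c2.symm
    (by rw [c2]; linarith)
    (fun t ht => by
      have a1 := (abs_le.1 (hA t ht)).2
      have a2 := le_abs_self A
      linarith)
    (by positivity) (x3.neg tP ⟨x1.le, le_rfl⟩) x5
    (by
      have a1 := x3.lt_of_neg h le_rfl x1 le_rfl
      have a2 := hxn.lt_of_pos h le_rfl x1 x2.le
      linarith)
  have key := h.lens_bound x1 x2 (c1.trans k1) x3 k2 hxn x4 k3.symm k4 k5 k6
    (by rw [k7 ts ⟨le_rfl, c1.le⟩, c2]) k8 k9 x6 τ₁ ⟨c1.le, k1.le⟩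
  rw [k7 τ₁ ⟨c1.le, le_rfl⟩] at key
  have hR := hxn.rr_const h (by norm_num) (t := ts) ⟨by linarith, le_rfl⟩
  linarith

lemma Sol.deriv_rr (h : Sol p u v) (ε t y : ℝ) :
    HasDerivAt (fun y => v (t, y) - ε * qfun p (u (t, y))) (ww p u v ε (t, y)) y := by
  have h1 := hasDerivAt_px (h.hvd (t, y))
  have h2 := (h.qfun_deriv (u (t, y))).comp y (hasDerivAt_px (h.hud (t, y)))
  refine (h1.fun_sub (h2.const_mul ε)).congr_deriv ?_
  unfold ww
  ring

lemma Sol.main_one (h : Sol p u v) {t₀ : ℝ} (hneg : ∀ t, t ≤ t₀ → u (t, x t) < 0)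
    (hchar : ∀ t, t ≤ t₀ → HasDerivAt x (aa p (u (t, x t))) t) :
    (∀ t, t ≤ t₀ → 0 ≤ deriv (fun y => v (t, y) - 1 * qfun p (u (t, y))) (x t)) ∨
      Tendsto (fun t => -u (t, x t)) atBot atTop := by
  by_contra hcon
  push Not at hcon
  obtain ⟨⟨t₁, ht, hd⟩, hT⟩ := hcon
  rw [(h.deriv_rr 1 t₁ (x t₁)).deriv] at hd
  refine hT (h.main (t₁ := t₁) (fun s => ⟨fun t hts => ?_, fun t hts => ?_, fun t hts => ?_⟩) ?_)
  · exact (hchar t (hts.2.trans ht)).continuousAt.continuousWithinAt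
  · rw [one_mul]; exact hchar t (hts.2.le.trans ht)
  · exact hneg t (hts.2.trans ht)
  · exact mul_neg_of_pos_of_neg (h.bb_pos (hneg t₁ ht)) hd

end

end PSys


/-- Lemma 2.1(2), backward time: along a characteristic curve of the `i`-th
eigenvalue (`ε = 1` for `i = 1`, `ε = -1` for `i = 2`, eigenvalue
`λᵢ(u) = ε√(-p'(u))`, Riemann invariant `rᵢ = v - ε·q(u)`) defined on all of
`(-∞, t₀]`, either `∂rᵢ/∂x (t, x(t)) ≥ 0` for all `t ≤ t₀`, or
`-u(t, x(t)) → +∞` as `t → -∞`. -/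
theorem psystem_characteristic_semiinfinite_backward
    (p : ℝ → ℝ) (hp : ContDiff ℝ 2 p) (hconv : ∀ w : ℝ, 0 < deriv (deriv p) w)
    (hp0 : p 0 = 0) (hp'0 : deriv p 0 = 0)
    (u v : ℝ × ℝ → ℝ) (hu : ContDiff ℝ 2 u) (hv : ContDiff ℝ 2 v)
    (hsys : PSystem p u v Set.univ)
    (ε : ℝ) (hε : ε = 1 ∨ ε = -1)
    (t₀ : ℝ) (x : ℝ → ℝ)
    (hhyp : ∀ t, t ≤ t₀ → u (t, x t) < 0)
    (hchar : ∀ t, t ≤ t₀ →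
      HasDerivAt x (ε * Real.sqrt (-(deriv p (u (t, x t))))) t) :
    (∀ t, t ≤ t₀ → 0 ≤ deriv (fun y => v (t, y) - ε * qfun p (u (t, y))) (x t)) ∨
      Filter.Tendsto (fun t => -u (t, x t)) Filter.atBot Filter.atTop := by
  have h : PSys.Sol p u v := PSys.Sol.of_psystem hp hconv hp'0 hu hv hsys
  rcases hε with rfl | rfl
  · exact h.main_one hhyp fun t ht => (hchar t ht).congr_deriv (one_mul _)
  · -- the second family is the first one for the reflected solution
    have hm := h.reflect.main_one (x := fun t => -x t) (t₀ := t₀)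
      (fun t ht => by simpa using hhyp t ht)
      (fun t ht => (hchar t ht).fun_neg.congr_deriv (by simp [PSys.aa]))
    simp only [neg_neg] at hm
    refine hm.imp (fun hh t ht => ?_) id
    have h1 := hh t ht
    rw [(h.deriv_rr (-1) t (x t)).deriv]
    have h2 : HasDerivAt (fun y => -v (t, -y) - 1 * qfun p (u (t, -y)))
        (PSys.ww p u v (-1) (t, x t)) (-x t) := by
      have h3 := h.deriv_rr (-1) t (- -x t)
      have h4 := (HasDerivAt.comp (-x t) h3 (hasDerivAt_neg (-x t))).fun_neg
      rw [neg_neg] at h4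
      refine (h4.congr_deriv (by ring)).congr_of_eventuallyEq (Filter.Eventually.of_forall ?_)
      intro y
      simp only [Function.comp_apply]
      ring
    rwa [h2.deriv] at h1
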